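/- arXiv:2601.10238 — 4 statements merged into one kernel-verified Lean document; each statement's English description precedes it below -/
import Mathlib

section
/- For all integers m ≥ k ≥ 3, the Ramsey number of the cycle on k vertices versus the matching of m edges satisfies R(C_k, m·K₂) = 2m + ⌊(k−1)/2⌋. -/
/-- `G` has a copy in `C`: there is an injective graph homomorphism from `G` to `C`,
i.e. `C` contains `G` as a (not necessarily induced) subgraph. -/
def HasCopy {α β : Type*} (G : SimpleGraph α) (C : SimpleGraph β) : Prop :=
  ∃ f : G →g C, Function.Injective f

/-- The Ramsey number `R(G, H)`: the least `N` such that every red-blue colouring of the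
edges of `K_N` (encoded by the graph `C` of red edges) contains a red copy of `G` or a
blue copy of `H`. -/
noncomputable def ramseyNumber {α β : Type*} (G : SimpleGraph α) (H : SimpleGraph β) : ℕ :=
  sInf {N : ℕ | ∀ C : SimpleGraph (Fin N), HasCopy G C ∨ HasCopy H Cᶜ}


/-- The matching `m·K₂`: `m` pairwise vertex-disjoint edges. -/
def matchingGraph (m : ℕ) : SimpleGraph (Fin m × Fin 2) where
  Adj a b := a.1 = b.1 ∧ a.2 ≠ b.2
  symm := ⟨fun _ _ h => ⟨h.1.symm, h.2.symm⟩⟩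
  loopless := ⟨fun _ h => h.2 rfl⟩

open Finset

/-- The join of `G` with a complete graph on `t` vertices. -/
def joinK {N : ℕ} (G : SimpleGraph (Fin N)) (t : ℕ) : SimpleGraph (Fin N ⊕ Fin t) where
  Adj a b := a ≠ b ∧ ∀ x y, a = Sum.inl x → b = Sum.inl y → G.Adj x y
  symm := ⟨fun _ _ h => ⟨h.1.symm, fun x y hx hy => (h.2 y x hy hx).symm⟩⟩
  loopless := ⟨fun _ h => h.1 rfl⟩

/-- A perfect matching of the join yields a matching of size `m` in `G`. -/
lemma copy_of_pm {m t : ℕ} (G : SimpleGraph (Fin (2 * m + t)))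
    (M : (joinK G t).Subgraph) (hM : M.IsPerfectMatching) :
    HasCopy (matchingGraph m) G := by
  classical
  have h1 : ∀ v, ∃! w, M.Adj v w := fun v => hM.1 (hM.2 v)
  choose p hp hpu using h1
  simp only at hpu
  have hpp : ∀ v, p (p v) = v := fun v => (hpu (p v) v (hp v).symm).symm
  have hinj : Function.Injective p := fun a b h => by rw [← hpp a, h, hpp]
  have hadj : ∀ v w, p (Sum.inl v) = Sum.inl w → G.Adj v w := by
    intro v w h
    have h2 := (hp (Sum.inl v)).adj_sub
    exact h2.2 v w rfl h
  let Q : Finset (Fin (2 * m + t)) := univ.filter (fun v => ∃ w, p (Sum.inl v) = Sum.inl w)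
  have hQc : Qᶜ.card ≤ t := by
    have : ∀ v ∈ Qᶜ, ∃ w : Fin t, p (Sum.inl v) = Sum.inr w := by
      intro v hv
      rcases h : p (Sum.inl v) with w | w
      · simp [Q] at hv
        exact absurd h (hv w)
      · exact ⟨w, rfl⟩
    choose g hg using this
    have := Finset.card_le_card_of_injOn (s := Qᶜ.attach) (t := (univ : Finset (Fin t)))
      (fun x => g x.1 x.2)
      (by intro x _; simp) (by
        intro x _ y _ hxy
        have := (hg x.1 x.2).trans ((congrArg Sum.inr hxy).trans (hg y.1 y.2).symm)
        exact Subtype.ext (Sum.inl_injective (hinj this)))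
    rw [card_attach] at this
    simpa using this
  have hQ : 2 * m ≤ Q.card := by
    have := Finset.card_add_card_compl Q
    rw [Fintype.card_fin] at this
    omega
  have hq : ∀ v ∈ Q, ∃ w, p (Sum.inl v) = Sum.inl w := by
    intro v hv; simpa [Q] using hv
  choose! q hq using hq
  have hqQ : ∀ v ∈ Q, q v ∈ Q := by
    intro v hv
    simp only [Q, mem_filter, mem_univ, true_and]
    exact ⟨v, by rw [← hq v hv, hpp]⟩
  have hqq : ∀ v ∈ Q, q (q v) = v := by
    intro v hv
    apply Sum.inl_injective (β := Fin t)
    rw [← hq _ (hqQ v hv), ← hq v hv, hpp]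
  have hqadj : ∀ v ∈ Q, G.Adj v (q v) := fun v hv => hadj _ _ (hq v hv)
  let P := Q.filter (fun v => v < q v)
  have hP : m ≤ P.card := by
    have hsub : Q ⊆ P ∪ P.image q := by
      intro v hv
      rcases lt_or_gt_of_ne (hqadj v hv).ne with h | h
      · simp [P, hv, h]
      · apply mem_union_right
        rw [mem_image]
        exact ⟨q v, by simp [P, hqQ v hv, hqq v hv, h], hqq v hv⟩
    have h1 := card_le_card hsub
    have h2 := card_union_le P (P.image q)
    have h3 := card_image_le (s := P) (f := q)
    omega
  obtain ⟨P', hP', hc⟩ := Finset.exists_subset_card_eq hP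
  let e := P'.equivFinOfCardEq hc
  have he : ∀ i, ((e.symm i : Fin (2*m+t)) ∈ Q) ∧ (e.symm i : Fin (2*m+t)) < q (e.symm i) := by
    intro i
    have := hP' (e.symm i).2
    simpa [P] using this
  have hei : ∀ i j, (e.symm i : Fin (2*m+t)) = e.symm j → i = j := by
    intro i j h
    exact e.symm.injective (Subtype.ext h)
  refine ⟨⟨fun x => if x.2 = 0 then (e.symm x.1 : Fin (2*m+t)) else q (e.symm x.1), ?_⟩, ?_⟩
  · rintro ⟨i, a⟩ ⟨j, b⟩ ⟨h1, h2⟩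
    simp only at h1 h2
    subst h1
    have := hqadj _ (he i).1
    fin_cases a <;> fin_cases b <;> simp_all [SimpleGraph.adj_comm]
  · rintro ⟨i, a⟩ ⟨j, b⟩ h
    have hi := he i
    have hj := he j
    have hqi := hqq _ hi.1
    have hqj := hqq _ hj.1
    have hij := hei i j
    simp only [RelHom.coeFn_mk] at h
    fin_cases a <;> fin_cases b <;> simp at h ⊢
    · exact h
    · exfalso
      rw [h, hqj] at hi
      exact lt_asymm hi.2 hj.2
    · exfalso
      rw [← h, hqi] at hj
      exact lt_asymm hi.2 hj.2
    · apply hij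
      rw [← hqi, h, hqj]

/-- A form of the Tutte-Berge formula. -/
lemma berge {m t : ℕ} (G : SimpleGraph (Fin (2 * m + t)))
    (h : ¬ HasCopy (matchingGraph m) G) :
    ∃ (ι : Type) (_ : DecidableEq ι) (W : Finset (Fin (2 * m + t))) (c : Fin (2 * m + t) → ι),
      (∀ x ∈ W, ∀ y ∈ W, c x ≠ c y → ¬ G.Adj x y) ∧
      2 * m + 2 * t + 2 ≤ (W.image c).card + W.card := by
  classical
  have h1 : ¬ ∃ M : (joinK G t).Subgraph, M.IsPerfectMatching := by
    rintro ⟨M, hM⟩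
    exact h (copy_of_pm G M hM)
  rw [SimpleGraph.tutte] at h1
  push Not at h1
  obtain ⟨u, hu⟩ := h1
  unfold SimpleGraph.IsTutteViolator at hu
  set H := ((⊤ : (joinK G t).Subgraph).deleteVerts u) with hH
  have hverts : ∀ v, v ∈ H.verts ↔ v ∉ u := by intro v; simp [hH]
  have hHadj : ∀ a b : H.verts, (joinK G t).Adj a b → H.coe.Adj a b := by
    intro a b hab
    have ha := (hverts _).1 a.2
    have hb := (hverts _).1 b.2
    simp only [SimpleGraph.Subgraph.coe_adj, hH, SimpleGraph.Subgraph.deleteVerts_adj]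
    exact ⟨trivial, ha, trivial, hb, hab⟩
  have hcard : Nat.card H.verts + u.ncard = 2 * m + 2 * t := by
    have e1 : H.verts = uᶜ := by ext v; simp [hverts]
    rw [Nat.card_coe_set_eq, e1]
    have := Set.ncard_add_ncard_compl u
    simp at this
    omega
  have hpar := SimpleGraph.odd_ncard_oddComponents H.coe
  have hodd : u.ncard + 2 ≤ H.coe.oddComponents.ncard := by
    rcases Nat.even_or_odd (Nat.card H.verts) with h2 | h2
    · have h3 : ¬ Odd H.coe.oddComponents.ncard := by
        rw [hpar]; exact Nat.not_odd_iff_even.2 h2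
      rw [Nat.not_odd_iff_even] at h3
      obtain ⟨a, ha⟩ := h2
      obtain ⟨b, hb⟩ := h3
      omega
    · have h3 := hpar.2 h2
      obtain ⟨a, ha⟩ := h2
      obtain ⟨b, hb⟩ := h3
      omega
  have hle : H.coe.oddComponents.ncard ≤ Nat.card H.coe.ConnectedComponent := by
    exact Set.ncard_le_card _
  have hinr : ∀ i : Fin t, Sum.inr i ∈ u := by
    intro i
    by_contra hi
    have : Nat.card H.coe.ConnectedComponent ≤ 1 := by
      rw [Finite.card_le_one_iff_subsingleton]
      let z : H.verts := ⟨Sum.inr i, (hverts _).2 hi⟩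
      have key : ∀ C : H.coe.ConnectedComponent, C = H.coe.connectedComponentMk z := by
        intro C
        induction C using SimpleGraph.ConnectedComponent.ind with
        | h v =>
          by_cases hv : v = z
          · rw [hv]
          · apply SimpleGraph.ConnectedComponent.sound
            apply SimpleGraph.Adj.reachable
            apply hHadj
            refine ⟨fun hh => hv (Subtype.ext hh), ?_⟩
            intro x y _ hy
            simp [z] at hy
      exact ⟨fun a b => (key a).trans (key b).symm⟩
    omega
  let c : Fin (2 * m + t) → Option H.coe.ConnectedComponent := fun v =>
    if hv : Sum.inl v ∉ u then some (H.coe.connectedComponentMk ⟨Sum.inl v, (hverts _).2 hv⟩)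
    else none
  let W : Finset (Fin (2 * m + t)) := univ.filter (fun v => Sum.inl v ∉ u)
  have hW : W.card = Nat.card H.verts := by
    have e1 : H.verts = ((W.map ⟨Sum.inl, Sum.inl_injective⟩ : Finset (Fin (2 * m + t) ⊕ Fin t)) :
        Set (Fin (2 * m + t) ⊕ Fin t)) := by
      ext v
      rcases v with v | v
      · simp [hverts, W]
      · simp [hverts, hinr]
    rw [Nat.card_coe_set_eq, e1, Set.ncard_coe_finset, card_map]
  refine ⟨_, inferInstance, W, c, ?_, ?_⟩
  · intro x hx y hy hne hadj
    have hx' : Sum.inl x ∉ u := by simpa [W] using hx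
    have hy' : Sum.inl y ∉ u := by simpa [W] using hy
    apply hne
    simp only [c, dif_pos hx', dif_pos hy']
    congr 1
    apply SimpleGraph.ConnectedComponent.sound
    apply SimpleGraph.Adj.reachable
    apply hHadj
    refine ⟨fun hh => hadj.ne (Sum.inl_injective hh), ?_⟩
    intro a b ha hb
    have ha := Sum.inl_injective ha
    have hb := Sum.inl_injective hb
    rw [← ha, ← hb]; exact hadj
  · have hC : Nat.card H.coe.ConnectedComponent ≤ (W.image c).card := by
      have : Fintype H.coe.ConnectedComponent := Fintype.ofFinite _
      rw [Nat.card_eq_fintype_card, ← Finset.card_univ]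
      apply Finset.card_le_card_of_injOn some
      · intro C _
        induction C using SimpleGraph.ConnectedComponent.ind with
        | h v =>
          obtain ⟨v, hv⟩ := v
          have hv' := (hverts _).1 hv
          rcases v with v | v
          · simp only [coe_image, Set.mem_image, mem_coe]
            exact ⟨v, by simpa [W] using hv', by simp [c, hv']⟩
          · exact absurd (hinr v) hv'
      · intro a _ b _ hab
        exact Option.some_injective _ hab
    omega

/-- Splitting the colour classes into two sides. -/
lemma split_parts {V ι : Type*} [DecidableEq V] [DecidableEq ι] (W : Finset V) (c : V → ι) (t : ℕ)
    (ht : 1 ≤ t) (hW : 3 * t + 2 ≤ W.card) (hc : t + 2 ≤ (W.image c).card) :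
    ∃ A B : Finset V, A ⊆ W ∧ B ⊆ W ∧ t + 1 ≤ A.card ∧ t + 1 ≤ B.card ∧
      (∀ a ∈ A, ∀ b ∈ B, c a ≠ c b) ∧ ∃ a ∈ A, ∃ a' ∈ A, c a ≠ c a' := by
  by_cases hbig : ∃ i, t + 1 ≤ (W.filter (fun v => c v = i)).card
  · obtain ⟨i, hi⟩ := hbig
    have himg : (W.image c).erase i ⊆ (W.filter (fun v => c v ≠ i)).image c := by
      intro j hj
      simp only [mem_erase, mem_image, mem_filter] at hj ⊢
      obtain ⟨hji, v, hv, rfl⟩ := hj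
      exact ⟨v, ⟨hv, hji⟩, rfl⟩
    have h1 := card_le_card himg
    have h2 := Finset.pred_card_le_card_erase (s := W.image c) (a := i)
    refine ⟨W.filter (fun v => c v ≠ i), W.filter (fun v => c v = i), filter_subset _ _,
      filter_subset _ _, ?_, hi, ?_, ?_⟩
    · have := card_image_le (s := W.filter (fun v => c v ≠ i)) (f := c)
      omega
    · intro a ha b hb
      simp only [mem_filter] at ha hb
      rw [hb.2]; exact ha.2
    · have : 1 < ((W.filter (fun v => c v ≠ i)).image c).card := by omega
      obtain ⟨x, hx, y, hy, hxy⟩ := Finset.one_lt_card.1 this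
      obtain ⟨a, ha, rfl⟩ := mem_image.1 hx
      obtain ⟨b, hb, rfl⟩ := mem_image.1 hy
      exact ⟨a, ha, b, hb, hxy⟩
  · push Not at hbig
    have hex : ∀ I : Finset ι, t + 1 ≤ (W.filter (fun v => c v ∈ I)).card →
        ∃ J : Finset ι, t + 1 ≤ (W.filter (fun v => c v ∈ J)).card ∧
          (W.filter (fun v => c v ∈ J)).card ≤ 2 * t := by
      intro I
      induction I using Finset.induction_on with
      | empty => intro h; simp at h
      | insert i I hi ih =>
        intro h
        by_cases h2 : t + 1 ≤ (W.filter (fun v => c v ∈ I)).card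
        · exact ih h2
        · refine ⟨insert i I, h, ?_⟩
          have hsub : W.filter (fun v => c v ∈ insert i I) ⊆
              W.filter (fun v => c v = i) ∪ W.filter (fun v => c v ∈ I) := by
            intro v hv
            simp only [mem_filter, mem_insert, mem_union] at hv ⊢
            tauto
          have h3 := card_le_card hsub
          have h4 := card_union_le (W.filter (fun v => c v = i)) (W.filter (fun v => c v ∈ I))
          have h5 := hbig i
          omega
    obtain ⟨J, hJ1, hJ2⟩ := hex (W.image c) (by
      rw [filter_true_of_mem (fun v hv => mem_image_of_mem c hv)]; omega)
    refine ⟨W.filter (fun v => c v ∈ J), W.filter (fun v => c v ∉ J), filter_subset _ _,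
      filter_subset _ _, hJ1, ?_, ?_, ?_⟩
    · have := card_filter_add_card_filter_not (s := W) (fun v => c v ∈ J)
      omega
    · intro a ha b hb hab
      simp only [mem_filter] at ha hb
      rw [hab] at ha
      exact hb.2 ha.2
    · by_contra hcon
      push Not at hcon
      have hne : (W.filter (fun v => c v ∈ J)).Nonempty := card_pos.1 (by omega)
      obtain ⟨a, ha⟩ := hne
      have : W.filter (fun v => c v ∈ J) ⊆ W.filter (fun v => c v = c a) := by
        intro b hb
        exact mem_filter.2 ⟨(mem_filter.1 hb).1, hcon b hb a ha⟩
      have h1 := card_le_card this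
      have h2 := hbig (c a)
      omega

lemma enum_set {V : Type*} [DecidableEq V] [Nonempty V] (A : Finset V) (n : ℕ) (h : n ≤ A.card) :
    ∃ f : ℕ → V, (∀ i < n, f i ∈ A) ∧ ∀ i < n, ∀ j < n, f i = f j → i = j := by
  classical
  obtain ⟨B, hB, hc⟩ := Finset.exists_subset_card_eq h
  let e := B.equivFinOfCardEq hc
  refine ⟨fun i => if hi : i < n then e.symm ⟨i, hi⟩ else Classical.arbitrary V, ?_, ?_⟩
  · intro i hi
    simp only [hi, dif_pos]
    exact hB (e.symm ⟨i, hi⟩).2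
  · intro i hi j hj hij
    simp only [hi, hj, dif_pos] at hij
    have := e.symm.injective (Subtype.ext hij)
    simpa using this

lemma cycle_copy {V : Type*} [DecidableEq V] (R : SimpleGraph V) (A B : Finset V) (t k : ℕ)
    (ht : 1 ≤ t) (hk : k = 2 * t + 1 ∨ k = 2 * t + 2)
    (hA : t + 1 ≤ A.card) (hB : t + 1 ≤ B.card)
    (hAB : ∀ a ∈ A, ∀ b ∈ B, R.Adj a b) (a a' : V) (ha : a ∈ A) (ha' : a' ∈ A)
    (haa : R.Adj a a') : HasCopy (SimpleGraph.cycleGraph k) R := by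
  classical
  have : Nonempty V := ⟨a⟩
  obtain ⟨β, hβ, hβi⟩ := enum_set B (t + 1) hB
  obtain ⟨r, hr, hri⟩ := enum_set ((A.erase a).erase a') (t - 1) (by
    rw [card_erase_of_mem (mem_erase.2 ⟨haa.ne.symm, ha'⟩), card_erase_of_mem ha]; omega)
  have hr' : ∀ i < t - 1, r i ≠ a ∧ r i ≠ a' ∧ r i ∈ A := by
    intro i hi
    have := hr i hi
    simp only [mem_erase] at this
    tauto
  obtain ⟨α, hα, hαi, h0, h1⟩ : ∃ α : ℕ → V, (∀ i < t + 1, α i ∈ A) ∧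
      (∀ i < t + 1, ∀ j < t + 1, α i = α j → i = j) ∧ α 0 = a ∧ α t = a' := by
    refine ⟨fun i => if i = 0 then a else if i = t then a' else r (i - 1), ?_, ?_, ?_, ?_⟩
    · intro i hi
      have := hr' (i - 1)
      dsimp only
      split_ifs with h1 h2
      · exact ha
      · exact ha'
      · exact (this (by omega)).2.2
    · intro i hi j hj hij
      have h1 := hr' (i - 1)
      have h2 := hr' (j - 1)
      have h3 := hri (i - 1)
      have h4 := h3
      have h5 := haa.ne
      dsimp only at hij
      split_ifs at hij with g1 g2 g3 g4 g5 g6 g7 g8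
      · omega
      · exact absurd hij h5
      · exact absurd hij.symm (h2 (by omega)).1
      · exact absurd hij.symm h5
      · omega
      · exact absurd hij.symm (h2 (by omega)).2.1
      · exact absurd hij (h1 (by omega)).1
      · exact absurd hij (h1 (by omega)).2.1
      · have := h3 (by omega) (j - 1) (by omega) hij
        omega
    · simp
    · have : t ≠ 0 := by omega
      simp [this]
  have hdisj : ∀ x ∈ A, ∀ y ∈ B, x ≠ y := fun x hx y hy => (hAB x hx y hy).ne
  let F : ℕ → V := fun i => if i % 2 = 0 then α (i / 2) else β (i / 2)
  have hstep : ∀ i, i + 1 < k → R.Adj (F i) (F (i + 1)) := by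
    intro i hi
    dsimp only [F]
    rcases Nat.mod_two_eq_zero_or_one i with h | h
    · rw [if_pos h, if_neg (by omega)]
      exact hAB _ (hα _ (by omega)) _ (hβ _ (by omega))
    · rw [if_neg (by omega), if_pos (by omega)]
      exact (hAB _ (hα _ (by omega)) _ (hβ _ (by omega))).symm
  have hwrap : R.Adj (F (k - 1)) (F 0) := by
    have hF0 : F 0 = a := by simp [F, h0]
    rw [hF0]
    dsimp only [F]
    rcases hk with hk | hk
    · rw [if_pos (by omega)]
      have : (k - 1) / 2 = t := by omega
      rw [this, h1]
      exact haa.symm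
    · rw [if_neg (by omega)]
      exact (hAB _ ha _ (hβ _ (by omega))).symm
  have hsub : ∀ u v : Fin k, (u - v).val = 1 → R.Adj (F v) (F u) := by
    intro u v h
    rw [Fin.sub_def] at h
    simp only at h
    have hu := u.2
    have hv := v.2
    by_cases hvu : v.val ≤ u.val
    · have e : k - v.val + u.val = (u.val - v.val) + k := by omega
      rw [e, Nat.add_mod_right, Nat.mod_eq_of_lt (by omega)] at h
      have : u.val = v.val + 1 := by omega
      rw [this]
      exact hstep _ (by omega)
    · rw [Nat.mod_eq_of_lt (by omega)] at h
      have e1 : u.val = 0 := by omega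
      have e2 : v.val = k - 1 := by omega
      rw [e1, e2]
      exact hwrap
  refine ⟨⟨fun i => F i.val, ?_⟩, ?_⟩
  · intro u v huv
    rw [SimpleGraph.cycleGraph_adj'] at huv
    rcases huv with h | h
    · exact (hsub u v h).symm
    · exact hsub v u h
  · intro u v huv
    have hu := u.2
    have hv := v.2
    apply Fin.ext
    simp only [RelHom.coeFn_mk, F] at huv
    split_ifs at huv with g1 g2 g2
    · have := hαi _ (by omega) _ (by omega) huv
      omega
    · exact absurd huv (hdisj _ (hα _ (by omega)) _ (hβ _ (by omega)))
    · exact absurd huv.symm (hdisj _ (hα _ (by omega)) _ (hβ _ (by omega)))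
    · have := hβi _ (by omega) _ (by omega) huv
      omega

lemma upper (k m : ℕ) (hk : 3 ≤ k) (hm : k ≤ m)
    (C : SimpleGraph (Fin (2 * m + (k - 1) / 2))) :
    HasCopy (SimpleGraph.cycleGraph k) C ∨ HasCopy (matchingGraph m) Cᶜ := by
  by_contra hcon
  push Not at hcon
  obtain ⟨hc1, hc2⟩ := hcon
  obtain ⟨ι, _, W, c, hW, hcard⟩ := berge Cᶜ hc2
  have h1 : W.card ≤ 2 * m + (k - 1) / 2 := by simpa using card_le_univ W
  have h2 := card_image_le (s := W) (f := c)
  obtain ⟨A, B, hA, hB, hAc, hBc, hAB, a, ha, a', ha', haa⟩ :=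
    split_parts W c ((k - 1) / 2) (by omega) (by omega) (by omega)
  have hred : ∀ x ∈ W, ∀ y ∈ W, c x ≠ c y → C.Adj x y := by
    intro x hx y hy hxy
    have := hW x hx y hy hxy
    rw [SimpleGraph.compl_adj] at this
    by_contra h
    exact this ⟨fun e => hxy (congrArg c e), h⟩
  exact hc1 (cycle_copy C A B ((k - 1) / 2) k (by omega) (by omega) hAc hBc
    (fun x hx y hy => hred x (hA hx) y (hB hy) (hAB x hx y hy)) a a' ha ha'
    (hred a (hA ha) a' (hA ha') haa))

lemma lower (k m N : ℕ) (hk : 3 ≤ k) (hm : k ≤ m) (hN : N < 2 * m + (k - 1) / 2) :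
    ∃ C : SimpleGraph (Fin N),
      ¬ HasCopy (SimpleGraph.cycleGraph k) C ∧ ¬ HasCopy (matchingGraph m) Cᶜ := by
  classical
  set t := (k - 1) / 2 with ht
  let C : SimpleGraph (Fin N) :=
    { Adj := fun x y => x ≠ y ∧ (x.val < t ∨ y.val < t)
      symm := ⟨fun _ _ h => ⟨h.1.symm, h.2.symm⟩⟩
      loopless := ⟨fun _ h => h.1 rfl⟩ }
  refine ⟨C, ?_, ?_⟩
  · rintro ⟨f, hf⟩
    obtain ⟨n, rfl⟩ : ∃ n, k = n + 2 := ⟨k - 2, by omega⟩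
    let T : Finset (Fin (n + 2)) := univ.filter (fun i => (f i).val < t)
    have hT : T.card ≤ t := by
      have := Finset.card_le_card_of_injOn (s := T) (t := range t) (fun i => (f i).val)
        (by intro i hi; simpa [T] using hi)
        (by intro i _ j _ hij; exact hf (Fin.ext hij))
      simpa using this
    have hcov : (univ : Finset (Fin (n + 2))) ⊆ T ∪ T.image (fun i => i - 1) := by
      intro i _
      have hadj : (SimpleGraph.cycleGraph (n + 2)).Adj i (i + 1) := by
        rw [SimpleGraph.cycleGraph_adj]
        right; simp
      have h := (f.map_adj hadj).2
      rcases h with h | h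
      · exact mem_union_left _ (by simpa [T] using h)
      · apply mem_union_right
        rw [mem_image]
        exact ⟨i + 1, by simpa [T] using h, by simp⟩
    have h1 := card_le_card hcov
    have h2 := card_union_le T (T.image (fun i => i - 1))
    have h3 := card_image_le (s := T) (f := fun i => i - 1)
    simp only [card_univ, Fintype.card_fin] at h1
    omega
  · rintro ⟨f, hf⟩
    have hge : ∀ x, t ≤ (f x).val := by
      rintro ⟨i, a⟩
      have hadj : (matchingGraph m).Adj (i, a) (i, a + 1) :=
        ⟨rfl, by fin_cases a <;> simp⟩
      have h := f.map_adj hadj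
      rw [SimpleGraph.compl_adj] at h
      by_contra hlt
      exact h.2 ⟨h.1, Or.inl (by omega)⟩
    have := Finset.card_le_card_of_injOn (s := (univ : Finset (Fin m × Fin 2))) (t := Ico t N)
      (fun i => (f i).val)
      (by intro i _; simp only [coe_Ico, Set.mem_Ico]; exact ⟨hge i, (f i).2⟩)
      (by intro i _ j _ hij; exact hf (Fin.ext hij))
    simp at this
    omega

theorem stmt_8 (k m : ℕ) (hk : 3 ≤ k) (hm : k ≤ m) :
    ramseyNumber (SimpleGraph.cycleGraph k) (matchingGraph m) = 2 * m + (k - 1) / 2 := by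
  unfold ramseyNumber
  apply le_antisymm
  · exact Nat.sInf_le (fun C => upper k m hk hm C)
  · refine le_csInf ⟨_, fun C => upper k m hk hm C⟩ ?_
    intro N hN
    by_contra hlt
    obtain ⟨C, h1, h2⟩ := lower k m N hk hm (by omega)
    rcases hN C with h | h
    · exact h1 h
    · exact h2 h
end

section
/- For all integers m ≥ 1 and k ≥ 3, there exists a graph G on 2m + ⌊(k−1)/2⌋ − 1 vertices such that G contains no cycle on k vertices as a subgraph and the complement of G contains no matching of m edges. (Explicitly, one may take the complement of G to be a clique on 2m−1 vertices together with ⌊(k−1)/2⌋ isolated vertices.) -/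
theorem stmt_9 (m k : ℕ) (hm : 1 ≤ m) (hk : 3 ≤ k) :
    ∃ G : SimpleGraph (Fin (2 * m + (k - 1) / 2 - 1)),
      ¬ HasCopy (SimpleGraph.cycleGraph k) G ∧ ¬ HasCopy (matchingGraph m) Gᶜ := by
  obtain ⟨n, rfl⟩ : ∃ n, k = n + 2 := ⟨k - 2, by omega⟩
  refine ⟨{ Adj := fun u v => u ≠ v ∧ (2 * m - 1 ≤ u.val ∨ 2 * m - 1 ≤ v.val)
            symm := ⟨fun _ _ h => ⟨h.1.symm, h.2.symm⟩⟩
            loopless := ⟨fun _ h => h.1 rfl⟩ }, ?_, ?_⟩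
  · rintro ⟨f, hf⟩
    let S : Finset (Fin (n + 2)) := Finset.univ.filter fun i => 2 * m - 1 ≤ (f i).val
    have hS : S.card ≤ (n + 2 - 1) / 2 := by
      have h1 : (S.image fun i => (f i).val) ⊆
          Finset.Ico (2 * m - 1) (2 * m + (n + 2 - 1) / 2 - 1) := by
        intro x hx
        obtain ⟨i, hi, rfl⟩ := Finset.mem_image.1 hx
        exact Finset.mem_Ico.2 ⟨(Finset.mem_filter.1 hi).2, (f i).isLt⟩
      have h2 := Finset.card_le_card h1
      have hinj : Function.Injective (fun i => (f i).val) := Fin.val_injective.comp hf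
      rw [Finset.card_image_of_injective _ hinj, Nat.card_Ico] at h2
      omega
    have hU : (Finset.univ : Finset (Fin (n + 2))) ⊆ S ∪ S.image (fun i => i - 1) := by
      intro i _
      have hadj : (SimpleGraph.cycleGraph (n + 2)).Adj i (i + 1) := by
        rw [SimpleGraph.cycleGraph_adj]
        right
        simp
      have h := (f.map_adj hadj).2
      rw [Finset.mem_union, Finset.mem_image]
      rcases h with h | h
      · exact Or.inl (Finset.mem_filter.2 ⟨Finset.mem_univ _, h⟩)
      · exact Or.inr ⟨i + 1, Finset.mem_filter.2 ⟨Finset.mem_univ _, h⟩, by simp⟩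
    have h3 := Finset.card_le_card hU
    have h4 := Finset.card_union_le S (S.image (fun i => i - 1))
    have h5 : (S.image (fun i => i - 1)).card ≤ S.card := Finset.card_image_le
    rw [Finset.card_univ, Fintype.card_fin] at h3
    omega
  · rintro ⟨f, hf⟩
    have hlt : ∀ a, (f a).val < 2 * m - 1 := by
      rintro ⟨a, b⟩
      have hadj : (matchingGraph m).Adj (a, b) (a, b + 1) := ⟨rfl, by fin_cases b <;> simp⟩
      have h := f.map_adj hadj
      rw [SimpleGraph.compl_adj] at h
      by_contra hc
      exact h.2 ⟨h.1, Or.inl (not_lt.1 hc)⟩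
    have h := Fintype.card_le_of_injective
      (fun a => (⟨(f a).val, hlt a⟩ : Fin (2 * m - 1)))
      (fun a b hab => hf (Fin.ext (by simpa using hab)))
    simp only [Fintype.card_prod, Fintype.card_fin] at h
    omega
end

section
/- For every graph H with no isolated vertices, R(K₃, H) ≤ 2·e(H) + 1. -/
set_option linter.unusedSectionVars false
set_option linter.unusedVariables false

section RK
open Finset

variable {V β : Type} [Fintype V] [DecidableEq V] [Fintype β] [DecidableEq β]

def nb (H : SimpleGraph V) [DecidableRel H.Adj] (v : V) : Finset V := univ.filter (H.Adj v)

def e2 (H : SimpleGraph V) [DecidableRel H.Adj] (T : Finset V) : ℕ :=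
  ∑ v ∈ T, (T.filter (H.Adj v)).card

def Emb (H : SimpleGraph V) (C : SimpleGraph β) (T : Finset V) (g : V → β) : Prop :=
  Set.InjOn g T ∧ ∀ a ∈ T, ∀ b ∈ T, H.Adj a b → ¬ C.Adj (g a) (g b)

def Indep (C : SimpleGraph β) (K : Finset β) : Prop := ∀ a ∈ K, ∀ b ∈ K, ¬ C.Adj a b

structure Ctx (H : SimpleGraph V) [DecidableRel H.Adj] (C : SimpleGraph β) : Prop where
  tf : ∀ a b c, C.Adj a b → C.Adj b c → ¬ C.Adj a c
  ih : ∀ T : Finset V, T ≠ univ → ∀ Y : Finset β, T.card ≤ Y.card → e2 H T + 1 ≤ Y.card →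
    ∃ g : V → β, (∀ a ∈ T, g a ∈ Y) ∧ Emb H C T g
  no : ¬ ∃ g, Emb H C univ g
  hN : Fintype.card V ≤ Fintype.card β
  hq : e2 H univ + 1 ≤ Fintype.card β

variable {H : SimpleGraph V} [DecidableRel H.Adj] {C : SimpleGraph β} [DecidableRel C.Adj]

@[simp] lemma mem_nb {v w : V} : w ∈ nb H v ↔ H.Adj v w := by simp [nb]

lemma exists_inj (T : Finset V) (K : Finset β) (hK : K.Nonempty) (h : T.card ≤ K.card) :
    ∃ g : V → β, (∀ a ∈ T, g a ∈ K) ∧ Set.InjOn g T := by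
  obtain ⟨k0, hk0⟩ := hK
  have : Nonempty (T ↪ K) := by
    apply Function.Embedding.nonempty_of_card_le; simpa using h
  obtain ⟨f⟩ := this
  refine ⟨fun a => if ha : a ∈ T then f ⟨a, ha⟩ else k0, ?_, ?_⟩
  · intro a ha; simp [ha]
  · intro a ha b hb hab
    have ha' : a ∈ T := ha
    have hb' : b ∈ T := hb
    simp only [ha', hb', dif_pos] at hab
    have := f.injective (Subtype.ext hab)
    simpa using this

lemma exists_inj' (T : Finset V) (K : Finset β) (hT : T.Nonempty) (h : T.card ≤ K.card) :
    ∃ g : V → β, (∀ a ∈ T, g a ∈ K) ∧ Set.InjOn g T :=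
  exists_inj T K (card_pos.1 (lt_of_lt_of_le (card_pos.2 hT) h)) h

lemma Ctx.vne (c : Ctx H C) : Nonempty V := by
  by_contra h
  rw [not_nonempty_iff] at h
  exact c.no ⟨fun a => (h.false a).elim, fun a => (h.false a).elim, fun a => (h.false a).elim⟩

lemma Ctx.indep_lt (c : Ctx H C) {K : Finset β} (hK : Indep C K) : K.card < Fintype.card V := by
  by_contra h
  push Not at h
  obtain ⟨v⟩ := c.vne
  obtain ⟨g, hg, hi⟩ := exists_inj' (univ : Finset V) K ⟨v, mem_univ _⟩ (by simpa using h)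
  exact c.no ⟨g, hi, fun a ha b hb _ => hK _ (hg a ha) _ (hg b hb)⟩

lemma Ctx.exK (c : Ctx H C) : ∃ K : Finset β, Indep C K ∧ ∀ L, Indep C L → L.card ≤ K.card := by
  classical
  obtain ⟨K, hK, hm⟩ := exists_max_image (univ.filter (fun K : Finset β => Indep C K)) card
    ⟨∅, mem_filter.2 ⟨mem_univ _, fun a ha => absurd ha (notMem_empty a)⟩⟩
  refine ⟨K, by simpa using hK, fun L hL => hm L (by simpa using hL)⟩

lemma Ctx.nb_indep (c : Ctx H C) (x : β) : Indep C (nb C x) := by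
  intro a ha b hb h
  rw [mem_nb] at ha hb
  exact c.tf x a b ha h hb

/-- counting: points outside `B` and blue to all images of `S` -/
lemma count_blue {w : ℕ} (hw : ∀ x, (nb C x).card ≤ w) (B : Finset β) (S : Finset V) (g : V → β) :
    Fintype.card β ≤ ((univ \ B).filter (fun y => ∀ u ∈ S, ¬ C.Adj (g u) y)).card
      + B.card + S.card * w := by
  have h1 : (univ : Finset β) ⊆ ((univ \ B).filter (fun y => ∀ u ∈ S, ¬ C.Adj (g u) y)) ∪
      (B ∪ S.biUnion (fun u => nb C (g u))) := by
    intro y _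
    simp only [mem_union, mem_filter, mem_sdiff, mem_univ, true_and, mem_biUnion, mem_nb]
    by_cases hB : y ∈ B
    · tauto
    · by_cases h : ∃ u ∈ S, C.Adj (g u) y
      · tauto
      · push Not at h; tauto
  have h2 := card_le_card h1
  have h3 := card_union_le ((univ \ B).filter (fun y => ∀ u ∈ S, ¬ C.Adj (g u) y))
    (B ∪ S.biUnion (fun u => nb C (g u)))
  have h4 := card_union_le B (S.biUnion (fun u => nb C (g u)))
  have h5 : (S.biUnion (fun u => nb C (g u))).card ≤ S.card * w :=
    card_biUnion_le_card_mul _ _ _ (fun u _ => hw _)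
  rw [card_univ] at h2
  omega

lemma e2_mono {S T : Finset V} (h : S ⊆ T) : e2 H S ≤ e2 H T := by
  unfold e2
  calc _ ≤ ∑ v ∈ S, (T.filter (H.Adj v)).card :=
        sum_le_sum (fun v _ => card_le_card (filter_subset_filter _ h))
    _ ≤ _ := sum_le_sum_of_subset h

lemma e2_univ : e2 H univ = ∑ v, (nb H v).card := rfl

/-- greedy extension by one vertex -/
lemma Ctx.greedy (c : Ctx H C) {w : ℕ} (hw : ∀ x, (nb C x).card ≤ w) (v : V) :
    Fintype.card β ≤ Fintype.card V - 1 + (nb H v).card * w := by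
  by_contra hcon
  push Not at hcon
  have hT : (univ.erase v : Finset V) ≠ univ := fun h => by
    have := mem_univ v; rw [← h] at this; simp at this
  have hc : (univ.erase v : Finset V).card = Fintype.card V - 1 := by
    rw [card_erase_of_mem (mem_univ _), card_univ]
  have hm := e2_mono (H := H) (erase_subset v univ)
  have := c.hN; have := c.hq
  obtain ⟨g, -, hi, hb⟩ := c.ih _ hT univ (by rw [hc, card_univ]; omega) (by rw [card_univ]; omega)
  have h1 := count_blue hw ((univ.erase v).image g) (nb H v) g
  have h2 : ((univ.erase v).image g).card ≤ Fintype.card V - 1 := hc ▸ card_image_le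
  have h3 : 0 < ((univ \ ((univ.erase v).image g)).filter (fun y => ∀ u ∈ nb H v, ¬ C.Adj (g u) y)).card := by
    omega
  obtain ⟨y, hy⟩ := card_pos.1 h3
  simp only [mem_filter, mem_sdiff, mem_univ, true_and, mem_image, mem_erase, and_true, mem_nb] at hy
  obtain ⟨hy1, hy2⟩ := hy
  push Not at hy1
  apply c.no
  refine ⟨Function.update g v y, ?_, ?_⟩
  · intro a _ b _ hab
    by_cases ha : a = v <;> by_cases hbv : b = v
    · rw [ha, hbv]
    · subst ha; rw [Function.update_self, Function.update_of_ne hbv] at hab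
      exact absurd hab.symm (hy1 b hbv)
    · subst hbv; rw [Function.update_self, Function.update_of_ne ha] at hab
      exact absurd hab (hy1 a ha)
    · rw [Function.update_of_ne ha, Function.update_of_ne hbv] at hab
      exact hi (by simpa using ha) (by simpa using hbv) hab
  · intro a _ b _ hab
    by_cases ha : a = v <;> by_cases hbv : b = v
    · subst ha; subst hbv; exact absurd hab (H.loopless.irrefl _)
    · subst ha; rw [Function.update_self, Function.update_of_ne hbv]
      exact fun h => hy2 b hab h.symm
    · subst hbv; rw [Function.update_self, Function.update_of_ne ha]
      exact hy2 a hab.symm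
    · rw [Function.update_of_ne ha, Function.update_of_ne hbv]
      exact hb a (by simpa using ha) b (by simpa using hbv) hab

/-- gluing two partial embeddings -/
lemma glue {S : Finset V} {g1 g2 : V → β} {T : Finset V}
    (h1 : Emb H C S g1) (h2 : Emb H C T g2)
    (hd : ∀ a ∈ S, ∀ b ∈ T, g1 a ≠ g2 b)
    (hb : ∀ a ∈ S, ∀ b ∈ T, b ∉ S → H.Adj a b → ¬ C.Adj (g1 a) (g2 b)) :
    Emb H C (S ∪ T) (fun a => if a ∈ S then g1 a else g2 a) := by
  constructor
  · intro a ha b hb' hab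
    have ha : a ∈ S ∪ T := ha
    have hb' : b ∈ S ∪ T := hb'
    rw [mem_union] at ha hb'
    by_cases haS : a ∈ S <;> by_cases hbS : b ∈ S <;> simp only [haS, hbS, if_true, if_false] at hab
    · exact h1.1 haS hbS hab
    · exact absurd hab (hd a haS b (by tauto))
    · exact absurd hab.symm (hd b hbS a (by tauto))
    · exact h2.1 (show a ∈ T by tauto) (show b ∈ T by tauto) hab
  · intro a ha b hb' hab
    rw [mem_union] at ha hb'
    by_cases haS : a ∈ S <;> by_cases hbS : b ∈ S <;> simp only [haS, hbS, if_true, if_false]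
    · exact h1.2 a haS b hbS hab
    · exact hb a haS b (by tauto) hbS hab
    · exact fun h => hb b hbS a (by tauto) haS hab.symm h.symm
    · exact h2.2 a (by tauto) b (by tauto) hab

lemma e2_union_of_no_cross {S : Finset V} (h : ∀ a ∈ S, ∀ b, b ∉ S → ¬ H.Adj a b) :
    e2 H univ = e2 H S + e2 H Sᶜ := by
  unfold e2
  rw [← sum_add_sum_compl S]
  congr 1
  · refine sum_congr rfl fun v hv => congrArg card ?_
    ext w; simp only [mem_filter, mem_univ, true_and]
    constructor
    · intro hw; exact ⟨by by_contra hh; exact h v hv w hh hw, hw⟩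
    · exact fun hw => hw.2
  · refine sum_congr rfl fun v hv => congrArg card ?_
    ext w; simp only [mem_filter, mem_univ, true_and, mem_compl]
    rw [mem_compl] at hv
    constructor
    · intro hw; exact ⟨fun hh => h w hh v hv hw.symm, hw⟩
    · exact fun hw => hw.2

/-- connectivity -/
lemma Ctx.conn (c : Ctx H C) (hdeg : ∀ v, 1 ≤ (nb H v).card) (S : Finset V) (hS : S.Nonempty)
    (hS' : S ≠ univ) : ∃ a ∈ S, ∃ b, b ∉ S ∧ H.Adj a b := by
  by_contra hcon
  push Not at hcon
  have he := e2_union_of_no_cross hcon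
  have hcard : S.card ≤ e2 H S := by
    unfold e2
    calc S.card = ∑ v ∈ S, 1 := by simp
      _ ≤ _ := by
        refine sum_le_sum fun v hv => ?_
        refine (hdeg v).trans (card_le_card ?_)
        intro w hw
        rw [mem_nb] at hw
        rw [mem_filter]
        exact ⟨by by_contra hh; exact hcon v hv w hh hw, hw⟩
  have := c.hN; have hq := c.hq
  have hcc : S.card + Sᶜ.card = Fintype.card V := card_add_card_compl S
  obtain ⟨g1, -, h1⟩ := c.ih S hS' univ (by rw [card_univ]; omega) (by rw [card_univ]; omega)
  have himg : (S.image g1).card ≤ S.card := card_image_le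
  have hY : (univ \ S.image g1).card = Fintype.card β - (S.image g1).card := by
    rw [← compl_eq_univ_sdiff, card_compl]
  have hS2 : Sᶜ ≠ univ := by
    intro h; rw [compl_eq_univ_iff] at h; exact hS.ne_empty h
  obtain ⟨g2, hg2, h2⟩ := c.ih Sᶜ hS2 (univ \ S.image g1) (by rw [hY]; omega) (by rw [hY]; omega)
  apply c.no
  have := glue h1 h2 ?_ ?_
  · rw [union_compl] at this; exact ⟨_, this⟩
  · intro a ha b hb hab
    have := hg2 b hb
    rw [mem_sdiff] at this
    exact this.2 (hab ▸ mem_image_of_mem g1 ha)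
  · intro a ha b _ hb hab
    exact absurd hab (hcon a ha b hb)

/-- Join lemma. -/
lemma Ctx.join (c : Ctx H C) (X Q : Finset β) (W : Finset V) (hW : W.Nonempty)
    (hc : W.card ≤ X.card) (hX : Indep C X) (hd : Disjoint X Q)
    (hb : ∀ x ∈ X, ∀ y ∈ Q, ¬ C.Adj x y) (h1 : Wᶜ.card ≤ Q.card) (h2 : e2 H Wᶜ + 1 ≤ Q.card) :
    False := by
  obtain ⟨g1, hg1, hi⟩ := exists_inj' W X hW hc
  have hW' : Wᶜ ≠ univ := by
    intro h; rw [compl_eq_univ_iff] at h; exact hW.ne_empty h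
  obtain ⟨g2, hg2, he2⟩ := c.ih Wᶜ hW' Q h1 h2
  apply c.no
  have he1 : Emb H C W g1 := ⟨hi, fun a ha b hb _ => hX _ (hg1 a ha) _ (hg1 b hb)⟩
  have := glue he1 he2 ?_ ?_
  · rw [union_compl] at this; exact ⟨_, this⟩
  · intro a ha b hb hab
    exact disjoint_left.1 hd (hg1 a ha) (hab ▸ hg2 b hb)
  · intro a ha b hb' _ _
    exact hb _ (hg1 a ha) _ (hg2 b hb')

/-- A red complete bipartite graph gives a bound. -/
lemma Ctx.bijoin (c : Ctx H C) (X E : Finset β) (hXE : ∀ x ∈ X, ∀ y ∈ E, C.Adj x y)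
    (W1 W2 : Finset V) (hW1 : W1.Nonempty) (hW2 : W2.Nonempty)
    (hc1 : W1.card ≤ X.card) (hc2 : W2.card ≤ E.card) (q1 q2 : ℕ)
    (h1 : W1ᶜ.card ≤ q1 + 1) (h1' : e2 H W1ᶜ ≤ q1) (h2 : W2ᶜ.card ≤ q2 + 1) (h2' : e2 H W2ᶜ ≤ q2) :
    Fintype.card β ≤ X.card + E.card + q1 + q2 := by
  have hXn : X.Nonempty := card_pos.1 (lt_of_lt_of_le (card_pos.2 hW1) hc1)
  have hEn : E.Nonempty := card_pos.1 (lt_of_lt_of_le (card_pos.2 hW2) hc2)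
  obtain ⟨x0, hx0⟩ := hXn
  obtain ⟨y0, hy0⟩ := hEn
  have hX : Indep C X := fun a ha b hb h => c.tf a b y0 h (hXE b hb y0 hy0) (hXE a ha y0 hy0)
  have hE : Indep C E := fun a ha b hb h =>
    c.tf a b x0 h (hXE x0 hx0 b hb).symm (hXE x0 hx0 a ha).symm
  set R := univ \ (X ∪ E) with hR
  set QX := R.filter (fun z => ∀ x ∈ X, ¬ C.Adj x z) with hQX
  set QE := R.filter (fun z => ∀ x ∈ E, ¬ C.Adj x z) with hQE
  by_contra hcon
  push Not at hcon
  have a1 : QX.card ≤ q1 := by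
    by_contra hh
    refine c.join X QX W1 hW1 hc1 hX ?_ ?_ (by omega) (by omega)
    · rw [disjoint_left]; intro a ha hb
      rw [hQX, mem_filter, hR, mem_sdiff, mem_union] at hb; tauto
    · intro x hx y hy; rw [hQX, mem_filter] at hy; exact hy.2 x hx
  have a2 : QE.card ≤ q2 := by
    by_contra hh
    refine c.join E QE W2 hW2 hc2 hE ?_ ?_ (by omega) (by omega)
    · rw [disjoint_left]; intro a ha hb
      rw [hQE, mem_filter, hR, mem_sdiff, mem_union] at hb; tauto
    · intro x hx y hy; rw [hQE, mem_filter] at hy; exact hy.2 x hx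
  have hsub : (univ : Finset β) ⊆ (X ∪ E) ∪ (QX ∪ QE) := by
    intro z _
    by_cases hz : z ∈ X ∪ E
    · exact mem_union_left _ hz
    · apply mem_union_right
      have hzR : z ∈ R := by rw [hR, mem_sdiff]; exact ⟨mem_univ _, hz⟩
      rw [mem_union, hQX, hQE, mem_filter, mem_filter]
      by_contra hh
      have h3 : ∃ x ∈ X, C.Adj x z := by by_contra h; push Not at h; tauto
      have h4 : ∃ x ∈ E, C.Adj x z := by by_contra h; push Not at h; tauto
      obtain ⟨x, hx, hxz⟩ := h3
      obtain ⟨y, hy, hyz⟩ := h4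
      exact c.tf x z y hxz hyz.symm (hXE x hx y hy)
  have b1 := card_le_card hsub
  have b2 := card_union_le (X ∪ E) (QX ∪ QE)
  have b3 := card_union_le X E
  have b4 := card_union_le QX QE
  rw [card_univ] at b1
  omega

end RK

set_option linter.unusedSectionVars false
set_option linter.unusedVariables false

section RK2
open Finset

variable {V β : Type} [Fintype V] [DecidableEq V] [Fintype β] [DecidableEq β]
variable {H : SimpleGraph V} [DecidableRel H.Adj] {C : SimpleGraph β} [DecidableRel C.Adj]

lemma e2_insert {T : Finset V} {v : V} (hv : v ∉ T) :
    e2 H (insert v T) = e2 H T + 2 * (T.filter (H.Adj v)).card := by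
  unfold e2
  rw [sum_insert hv]
  have h1 : (insert v T).filter (H.Adj v) = T.filter (H.Adj v) := by
    rw [filter_insert, if_neg (H.loopless.irrefl v)]
  have h2 : ∀ u ∈ T, ((insert v T).filter (H.Adj u)).card =
      (T.filter (H.Adj u)).card + if H.Adj v u then 1 else 0 := by
    intro u hu
    rw [filter_insert]
    by_cases h : H.Adj u v
    · rw [if_pos h, if_pos h.symm, card_insert_of_notMem]
      simp [hv]
    · rw [if_neg h, if_neg (fun hh => h hh.symm)]; rfl
  rw [sum_congr rfl h2, sum_add_distrib, h1, card_filter]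
  ring

lemma e2_erase {T : Finset V} {v : V} (hv : v ∈ T) :
    e2 H (T.erase v) + 2 * (T.filter (H.Adj v)).card = e2 H T := by
  have h := e2_insert (H := H) (notMem_erase v T)
  rw [insert_erase hv] at h
  rw [h]
  have : (T.erase v).filter (H.Adj v) = T.filter (H.Adj v) := by
    ext w; simp only [mem_filter, mem_erase]
    constructor
    · tauto
    · rintro ⟨a, b⟩; exact ⟨⟨fun h => H.loopless.irrefl v (h ▸ b), a⟩, b⟩
  rw [this]

lemma e2_le_sup (T : Finset V) :
    e2 H T ≤ (T.sup fun v => (T.filter (H.Adj v)).card) * T.card := by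
  unfold e2
  rw [mul_comm, ← smul_eq_mul]
  exact sum_le_card_nsmul _ _ _ (fun v hv => le_sup (f := fun v => (T.filter (H.Adj v)).card) hv)

lemma greedyW_aux (j : ℕ) (hj : j ≤ Fintype.card V) : ∃ W : Finset V, W.card = j ∧
    ∃ d, (Wᶜ.sup fun v => (Wᶜ.filter (H.Adj v)).card) = d ∧ ∃ j0 k : ℕ, j = j0 + k ∧
      e2 H Wᶜ + 2 * d * k + d * j0 ≤ d * Fintype.card V ∧
      e2 H Wᶜ + 2 * d * j + 2 * j0 ≤ e2 H univ := by
  induction j with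
  | zero =>
    refine ⟨∅, rfl, _, rfl, 0, 0, rfl, ?_, ?_⟩
    · have := e2_le_sup (H := H) ((∅ : Finset V)ᶜ)
      simpa using this
    · simp
  | succ j ih =>
    obtain ⟨W, hW, d, hd, j0, k, hjk, h1, h2⟩ := ih (by omega)
    have hne : Wᶜ.Nonempty := by
      rw [← card_pos, card_compl]; omega
    obtain ⟨v, hv, hvd⟩ := exists_mem_eq_sup Wᶜ hne (fun v => (Wᶜ.filter (H.Adj v)).card)
    have hvW : v ∉ W := by simpa using hv
    have hcomp : (insert v W)ᶜ = Wᶜ.erase v := by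
      rw [compl_insert]
    have he := e2_erase (H := H) hv
    rw [hd] at hvd
    rw [← hvd] at he
    have hle : ((insert v W)ᶜ.sup fun u => ((insert v W)ᶜ.filter (H.Adj u)).card) ≤ d := by
      rw [hcomp]
      apply Finset.sup_le
      intro u hu
      rw [← hd]
      refine le_trans (card_le_card (filter_subset_filter _ (erase_subset _ _))) ?_
      exact le_sup (f := fun v => (Wᶜ.filter (H.Adj v)).card) (mem_of_mem_erase hu)
    have hc : (insert v W).card = j + 1 := by rw [card_insert_of_notMem hvW, hW]
    have hcc : ((insert v W)ᶜ).card = Fintype.card V - (j+1) := by rw [card_compl, hc]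
    rcases hle.lt_or_eq with hlt | heq
    · refine ⟨insert v W, hc, _, rfl, j+1, 0, rfl, ?_, ?_⟩
      · have h3 := e2_le_sup (H := H) ((insert v W)ᶜ)
        generalize ((insert v W)ᶜ.sup fun u => ((insert v W)ᶜ.filter (H.Adj u)).card) = d' at *
        rw [hcc] at h3
        obtain ⟨r, hr⟩ := Nat.exists_eq_add_of_le hj
        rw [hr] at h3 ⊢
        rw [Nat.add_sub_cancel_left] at h3
        nlinarith
      · generalize ((insert v W)ᶜ.sup fun u => ((insert v W)ᶜ.filter (H.Adj u)).card) = d' at *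
        rw [hcomp]
        have : (d'+1) * (j+1) ≤ d * (j+1) := Nat.mul_le_mul_right _ hlt
        nlinarith
    · refine ⟨insert v W, hc, d, heq, j0, k+1, by omega, ?_, ?_⟩
      · rw [hcomp]; nlinarith
      · rw [hcomp]; nlinarith

lemma greedyW (e : ℕ) (he : e ≤ Fintype.card V) (h3 : Fintype.card V ≤ 3 * e)
    (h2 : 2 * Fintype.card V ≤ e2 H univ) :
    ∃ W : Finset V, W.card = e ∧ 2 * e2 H Wᶜ + 2 * e ≤ e2 H univ := by
  obtain ⟨W, hW, d, hd, j0, k, hjk, a1, a2⟩ := greedyW_aux (H := H) e he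
  refine ⟨W, hW, ?_⟩
  have hs := e2_le_sup (H := H) Wᶜ
  rw [hd, card_compl, hW] at hs
  rcases le_or_gt d 1 with hd1 | hd1
  · have : d * (Fintype.card V - e) ≤ 1 * (Fintype.card V - e) := Nat.mul_le_mul_right _ hd1
    omega
  · obtain ⟨r, rfl⟩ := Nat.exists_eq_add_of_le (show 2 ≤ d from hd1)
    subst hjk
    have : (2 + r) * Fintype.card V ≤ (2+r) * (3 * (j0 + k)) := Nat.mul_le_mul_left _ h3
    nlinarith [Nat.zero_le (r * k)]

structure Cx (H : SimpleGraph V) [DecidableRel H.Adj] (C : SimpleGraph β) (K : Finset β)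
    (d s t : ℕ) : Prop where
  c : Ctx H C
  Ki : Indep C K
  Kmax : ∀ L, Indep C L → L.card ≤ K.card
  d2 : 2 ≤ d
  dmin : ∀ v, d ≤ (nb H v).card
  hs : e2 H univ = d * Fintype.card V + s
  ht : K.card + t = Fintype.card V
  t1 : 1 ≤ t
  key : d * t + s + 2 ≤ Fintype.card V
  NN : d * Fintype.card V + s + 1 ≤ Fintype.card β

lemma Cx.conn {K : Finset β} {d s t : ℕ} (c : Cx H C K d s t) (S : Finset V) (hS : S.Nonempty)
    (hS' : S ≠ univ) : ∃ a ∈ S, ∃ b, b ∉ S ∧ H.Adj a b :=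
  c.c.conn (fun v => by have := c.dmin v; have := c.d2; omega) S hS hS'

lemma Cx.nbK {K : Finset β} {d s t : ℕ} (c : Cx H C K d s t) (x : β) :
    (nb C x).card ≤ K.card := c.Kmax _ (c.c.nb_indep x)

lemma nb_eq_degree (v : V) : (nb H v).card = H.degree v := by
  rw [← SimpleGraph.card_neighborFinset_eq_degree]
  congr 1; ext w; simp

/-- no vertex of degree one or zero; set up the extended context -/
lemma Ctx.toCx (c : Ctx H C) : ∃ K d s t, Cx H C K d s t := by
  obtain ⟨K, hK, hm⟩ := c.exK
  have hlt := c.indep_lt hK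
  have := c.vne
  obtain ⟨v, -, hv⟩ := exists_min_image (univ : Finset V) (fun v => (nb H v).card) univ_nonempty
  have hg := c.greedy (w := K.card) (fun x => hm _ (c.nb_indep x)) v
  have hN := c.hN
  have hq := c.hq
  set d := (nb H v).card with hd
  have hle : d * Fintype.card V ≤ e2 H univ := by
    rw [e2_univ, mul_comm, ← smul_eq_mul]
    exact card_nsmul_le_sum _ _ _ (fun u hu => hv u hu)
  have hpos : 0 < d := by
    rcases Nat.eq_zero_or_pos d with h | h
    · rw [h] at hg; simp at hg; omega
    · exact h
  have hdeg : ∀ u, 1 ≤ (nb H u).card := fun u => hpos.trans_le (hv u (mem_univ _))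
  have hconn : H.Connected := by
    rw [SimpleGraph.connected_iff]
    refine ⟨fun a b => ?_, inferInstance⟩
    by_contra hab
    classical
    set S := univ.filter (fun x => H.Reachable a x)
    obtain ⟨x, hx, y, hy, hxy⟩ := c.conn hdeg S ⟨a, by simp [S]⟩ (fun h => by
      have := mem_univ b; rw [← h] at this; simp [S] at this; exact hab this)
    simp only [S, mem_filter, mem_univ, true_and] at hx hy
    exact hy (hx.trans hxy.reachable)
  have htree := hconn.card_vert_le_card_edgeSet_add_one
  rw [Nat.card_eq_fintype_card, Nat.card_eq_fintype_card, ← SimpleGraph.edgeFinset_card] at htree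
  have hsum := H.sum_degrees_eq_twice_card_edges
  have he : e2 H univ = 2 * H.edgeFinset.card := by
    rw [← hsum, e2_univ]; exact sum_congr rfl (fun u _ => nb_eq_degree u)
  have hd2 : 2 ≤ d := by
    by_contra hlt'
    have h1 : d = 1 := by omega
    rw [h1] at hg
    omega
  obtain ⟨s, hs⟩ := Nat.exists_eq_add_of_le hle
  obtain ⟨t, ht⟩ := Nat.exists_eq_add_of_le hlt.le
  refine ⟨K, d, s, t, c, hK, hm, hd2, fun u => hv u (mem_univ _), hs, ht.symm, by omega, ?_, by omega⟩
  have : d * Fintype.card V = d * K.card + d * t := by rw [ht]; ring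
  omega

end RK2

set_option linter.unusedSectionVars false
set_option linter.unusedVariables false

section RK3
open Finset

variable {V β : Type} [Fintype V] [DecidableEq V] [Fintype β] [DecidableEq β]
variable {H : SimpleGraph V} [DecidableRel H.Adj] {C : SimpleGraph β} [DecidableRel C.Adj]
variable {K : Finset β} {d s t : ℕ}

lemma Emb.ins {T : Finset V} {g : V → β} (h : Emb H C T g) {v : V} (hv : v ∉ T) {y : β}
    (hy : ∀ a ∈ T, g a ≠ y) (hb : ∀ a ∈ T, H.Adj v a → ¬ C.Adj (g a) y) :
    Emb H C (insert v T) (Function.update g v y) := by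
  have hne : ∀ a ∈ T, a ≠ v := fun a ha h => hv (h ▸ ha)
  constructor
  · intro a ha b hb' hab
    rw [mem_coe, mem_insert] at ha hb'
    rcases ha with ha | ha <;> rcases hb' with hb' | hb'
    · rw [ha, hb']
    · subst ha; rw [Function.update_self, Function.update_of_ne (hne _ hb')] at hab
      exact absurd hab.symm (hy b hb')
    · subst hb'; rw [Function.update_self, Function.update_of_ne (hne _ ha)] at hab
      exact absurd hab (hy a ha)
    · rw [Function.update_of_ne (hne _ ha), Function.update_of_ne (hne _ hb')] at hab
      exact h.1 ha hb' hab
  · intro a ha b hb' hab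
    rw [mem_insert] at ha hb'
    rcases ha with ha | ha <;> rcases hb' with hb' | hb'
    · subst ha; subst hb'; exact absurd hab (H.loopless.irrefl _)
    · subst ha; rw [Function.update_self, Function.update_of_ne (hne _ hb')]
      exact fun hh => hb b hb' hab hh.symm
    · subst hb'; rw [Function.update_self, Function.update_of_ne (hne _ ha)]
      exact hb a ha hab.symm
    · rw [Function.update_of_ne (hne _ ha), Function.update_of_ne (hne _ hb')]
      exact h.2 a ha b hb' hab

lemma Cx.case_adj (c : Cx H C K d s t) {v w : V} (hvw : H.Adj v w) (hv : (nb H v).card = d)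
    (hw : (nb H w).card = d) (h3 : Fintype.card V ≤ 3 * ((d-1)*t+s+3)) : False := by
  have hN := c.NN
  have hht := c.ht
  have hkey := c.key
  have ht1 := c.t1
  have hd2 := c.d2
  have hs := c.hs
  obtain ⟨r, rfl⟩ := Nat.exists_eq_add_of_le hd2
  have hr1 : 2 + r - 1 = r + 1 := by omega
  rw [hr1] at h3
  set e := (r+1)*t+s+3 with he
  have hvw' : v ≠ w := hvw.ne
  set T : Finset V := (univ.erase v).erase w with hT
  have hTv : v ∉ T := by simp [hT]
  have hTw : w ∉ T := by simp [hT]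
  have hTc : T.card = Fintype.card V - 2 := by
    rw [hT, card_erase_of_mem (by simp [hvw'.symm]), card_erase_of_mem (mem_univ _), card_univ]
    omega
  have hTm := e2_mono (H := H) (subset_univ T)
  obtain ⟨g, -, hg⟩ := c.c.ih T (fun h => hTv (h ▸ mem_univ v)) univ
    (by rw [card_univ]; have := c.c.hN; omega) (by rw [card_univ]; have := c.c.hq; omega)
  have hmul : (2 + r) * Fintype.card V = (r+1) * K.card + (r+1) * t + Fintype.card V := by
    rw [← hht]; ring
  have hi : (T.image g).card ≤ Fintype.card V - 2 := hTc ▸ card_image_le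
  have key : ∀ x x' : V, H.Adj x x' → (nb H x).card = 2 + r →
      e ≤ ((univ \ (T.image g)).filter (fun y => ∀ u ∈ (nb H x).erase x', ¬ C.Adj (g u) y)).card := by
    intro x x' hx hxd
    have h1 := count_blue (C := C) c.nbK (T.image g) ((nb H x).erase x') g
    rw [card_erase_of_mem (by simpa using hx), hxd, hr1] at h1
    omega
  have kv := key v w hvw hv
  have kw := key w v hvw.symm hw
  set A := (univ \ (T.image g)).filter (fun y => ∀ u ∈ (nb H v).erase w, ¬ C.Adj (g u) y) with hA
  set B := (univ \ (T.image g)).filter (fun y => ∀ u ∈ (nb H w).erase v, ¬ C.Adj (g u) y) with hB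
  have red : ∀ y ∈ A, ∀ x ∈ B, y ≠ x → C.Adj y x := by
    intro y hy x hx hyx
    by_contra hcon
    rw [hA, mem_filter, mem_sdiff] at hy
    rw [hB, mem_filter, mem_sdiff] at hx
    have hwT : ∀ a ∈ T, a ≠ w := fun a ha h => hTw (h ▸ ha)
    have hvT : ∀ a ∈ T, a ≠ v := fun a ha h => hTv (h ▸ ha)
    have g1 : Emb H C (insert v T) (Function.update g v y) := by
      refine hg.ins hTv ?_ ?_
      · intro a ha h; exact hy.1.2 (h ▸ mem_image_of_mem g ha)
      · intro a ha h; exact hy.2 a (by simp [h, hwT a ha])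
    have g2 := g1.ins (v := w) (y := x) (by simp [hvw'.symm, hTw]) ?_ ?_
    · apply c.c.no
      have hu : (univ : Finset V) = insert w (insert v T) := ?_
      · rw [hu]; exact ⟨_, g2⟩
      ext z; simp only [mem_univ, mem_insert, hT, mem_erase, true_iff]; tauto
    · intro a ha
      rcases mem_insert.1 ha with rfl | ha
      · rw [Function.update_self]; exact hyx
      · rw [Function.update_of_ne (hvT a ha)]
        intro h; exact hx.1.2 (h ▸ mem_image_of_mem g ha)
    · intro a ha hwa
      rcases mem_insert.1 ha with rfl | ha
      · rw [Function.update_self]; exact hcon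
      · rw [Function.update_of_ne (hvT a ha)]
        exact hx.2 a (by simp [hwa, hvT a ha])
  have hdis : ∀ z ∈ A, z ∉ B := by
    intro z hzA hzB
    obtain ⟨x, hx, hxz⟩ := exists_mem_ne (s := B) (by omega) z
    have : 0 < ((A.erase z).erase x).card := by
      have := pred_card_le_card_erase (s := A) (a := z)
      have := pred_card_le_card_erase (s := A.erase z) (a := x)
      omega
    obtain ⟨y, hy⟩ := card_pos.1 this
    simp only [mem_erase] at hy
    exact c.c.tf y z x (red y hy.2.2 z hzB hy.2.1) (red z hzA x hx hxz.symm) (red y hy.2.2 x hx hy.1)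
  obtain ⟨X, hXA, hX⟩ := exists_subset_card_eq kv
  obtain ⟨E, hEB, hE⟩ := exists_subset_card_eq kw
  have hmt : (2 + r) * t = (r+1)*t + t := by ring
  have hen : e ≤ Fintype.card V := by omega
  have h2n : 2 * Fintype.card V ≤ (2 + r) * Fintype.card V := Nat.mul_le_mul_right _ (by omega)
  obtain ⟨W, hW, hWe⟩ := greedyW (H := H) e hen h3 (by omega)
  have hWn : W.Nonempty := card_pos.1 (by omega)
  have hWc : Wᶜ.card = Fintype.card V - e := by rw [card_compl, hW]
  have := c.c.bijoin X E (fun x hx y hy => red x (hXA hx) y (hEB hy)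
    (fun h => hdis x (hXA hx) (h ▸ hEB hy))) W W hWn hWn (by omega) (by omega)
    (max (e2 H Wᶜ) (Fintype.card V - e - 1)) (max (e2 H Wᶜ) (Fintype.card V - e - 1))
    (by omega) (by omega) (by omega) (by omega)
  omega

end RK3

set_option linter.unusedSectionVars false
set_option linter.unusedVariables false

section RK4
open Finset

variable {V β : Type} [Fintype V] [DecidableEq V] [Fintype β] [DecidableEq β]

def NT (H : SimpleGraph V) [DecidableRel H.Adj] (T : Finset V) : Finset V := T.biUnion (nb H)

def cl (H : SimpleGraph V) [DecidableRel H.Adj] (T : Finset V) : Finset V := T ∪ NT H T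

structure StG (H : SimpleGraph V) [DecidableRel H.Adj] (C : SimpleGraph β) (K : Finset β)
    (T : Finset V) (g : V → β) : Prop where
  emb : Emb H C (cl H T) g
  out : ∀ a ∈ T, g a ∉ K
  ins : ∀ a ∈ cl H T, a ∉ T → g a ∈ K

variable {H : SimpleGraph V} [DecidableRel H.Adj] {C : SimpleGraph β} [DecidableRel C.Adj]
variable {K : Finset β} {d s t : ℕ}

lemma mem_NT {T : Finset V} {u : V} : u ∈ NT H T ↔ ∃ v ∈ T, H.Adj v u := by simp [NT]

lemma mem_cl {T : Finset V} {u : V} : u ∈ cl H T ↔ u ∈ T ∨ ∃ v ∈ T, H.Adj v u := by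
  simp [cl, mem_NT]

lemma cl_insert {T : Finset V} {v : V} : cl H (insert v T) = insert v (cl H T ∪ nb H v) := by
  ext u; simp only [mem_cl, mem_insert, mem_union, mem_nb, exists_eq_or_imp]; grind

lemma subset_cl {T : Finset V} : T ⊆ cl H T := subset_union_left

lemma StG.empty (g : V → β) : StG H C K ∅ g := by
  have : cl H (∅ : Finset V) = ∅ := by simp [cl, NT]
  refine ⟨?_, ?_, ?_⟩
  · rw [this]; exact ⟨by simp, by simp⟩
  · simp
  · rw [this]; simp

lemma Cx.finish (c : Cx H C K d s t) {T : Finset V} {g : V → β} (hg : StG H C K T g)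
    (hT : t ≤ T.card) : False := by
  by_cases hne : (cl H T)ᶜ.Nonempty
  · have h1 : (cl H T \ T).card + T.card = (cl H T).card := card_sdiff_add_card_eq_card subset_cl
    have h2 : ((cl H T \ T).image g).card ≤ (cl H T \ T).card := card_image_le
    have h3 : K.card - ((cl H T \ T).image g).card ≤ (K \ (cl H T \ T).image g).card :=
      le_card_sdiff _ _
    have h4 : (cl H T)ᶜ.card = Fintype.card V - (cl H T).card := card_compl _
    have h5 : (cl H T).card ≤ Fintype.card V := card_le_univ _
    have := c.ht
    obtain ⟨h, hh, hi⟩ := exists_inj' (cl H T)ᶜ (K \ (cl H T \ T).image g) hne (by omega)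
    have hh' : ∀ a ∈ (cl H T)ᶜ, h a ∈ K := fun a ha => (mem_sdiff.1 (hh a ha)).1
    have e2 : Emb H C (cl H T)ᶜ h := ⟨hi, fun a ha b hb _ => c.Ki _ (hh' a ha) _ (hh' b hb)⟩
    apply c.c.no
    have := glue hg.emb e2 ?_ ?_
    · rw [union_compl] at this; exact ⟨_, this⟩
    · intro a ha b hb hab
      by_cases haT : a ∈ T
      · exact hg.out a haT (hab ▸ hh' b hb)
      · have := (mem_sdiff.1 (hh b hb)).2
        exact this (hab ▸ mem_image_of_mem g (mem_sdiff.2 ⟨ha, haT⟩))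
    · intro a ha b hb hbn hab
      by_cases haT : a ∈ T
      · exact absurd (mem_cl.2 (Or.inr ⟨a, haT, hab⟩)) hbn
      · exact c.Ki _ (hg.ins a ha haT) _ (hh' b hb)
  · rw [not_nonempty_iff_eq_empty, compl_eq_empty_iff] at hne
    apply c.c.no
    have := hg.emb
    rw [hne] at this
    exact ⟨_, this⟩

lemma StG.step {T : Finset V} {g : V → β} (hK : Indep C K) (hg : StG H C K T g) {v : V}
    (hv : v ∉ T) (h : V → β) (y : β)
    (hi : Set.InjOn h ((nb H v \ cl H T : Finset V) : Set V))
    (hh : ∀ u ∈ nb H v \ cl H T, h u ∈ K \ ((cl H T \ T).erase v).image g)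
    (hyK : y ∉ K) (hyT : ∀ a ∈ T, g a ≠ y)
    (hb1 : ∀ a ∈ cl H T, H.Adj v a → ¬ C.Adj (g a) y)
    (hb2 : ∀ u ∈ nb H v \ cl H T, ¬ C.Adj (h u) y) : ∃ g', StG H C K (insert v T) g' := by
  set D := nb H v \ cl H T with hD
  have hhK : ∀ u ∈ D, h u ∈ K := fun u hu => (mem_sdiff.1 (hh u hu)).1
  have e1 : Emb H C ((cl H T).erase v) g :=
    ⟨hg.emb.1.mono (by simp), fun a ha b hb =>
      hg.emb.2 a (mem_of_mem_erase ha) b (mem_of_mem_erase hb)⟩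
  have e2 : Emb H C D h := ⟨hi, fun a ha b hb _ => hK _ (hhK a ha) _ (hhK b hb)⟩
  have e3 := glue e1 e2 ?_ ?_
  · have hvn : v ∉ (cl H T).erase v ∪ D := by
      simp [hD]
    have e4 := e3.ins (y := y) hvn ?_ ?_
    · refine ⟨Function.update (fun a => if a ∈ (cl H T).erase v then g a else h a) v y, ?_, ?_, ?_⟩
      · convert e4 using 1
        rw [cl_insert]
        ext u
        simp only [mem_insert, mem_union, mem_erase, hD, mem_sdiff]; tauto
      · intro a ha
        by_cases hav : a = v
        · subst hav; rw [Function.update_self]; exact hyK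
        · rw [Function.update_of_ne hav]
          have haT : a ∈ T := by rw [mem_insert] at ha; tauto
          rw [if_pos (mem_erase.2 ⟨hav, subset_cl haT⟩)]
          exact hg.out a haT
      · intro a ha han
        rw [mem_insert] at han
        push Not at han
        rw [Function.update_of_ne han.1]
        by_cases hac : a ∈ cl H T
        · rw [if_pos (mem_erase.2 ⟨han.1, hac⟩)]
          exact hg.ins a hac han.2
        · rw [if_neg (fun h => hac (mem_of_mem_erase h))]
          apply hhK
          rw [cl_insert, mem_insert, mem_union] at ha
          rw [hD, mem_sdiff]; tauto
    · intro a ha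
      by_cases hac : a ∈ (cl H T).erase v
      · rw [if_pos hac]
        by_cases haT : a ∈ T
        · exact hyT a haT
        · intro hh
          exact hyK (hh ▸ hg.ins a (mem_of_mem_erase hac) haT)
      · rw [if_neg hac]
        intro hh
        exact hyK (hh ▸ hhK a (by rw [mem_union] at ha; tauto))
    · intro a ha hva
      by_cases hac : a ∈ (cl H T).erase v
      · rw [if_pos hac]; exact hb1 a (mem_of_mem_erase hac) hva
      · rw [if_neg hac]; exact hb2 a (by rw [mem_union] at ha; tauto)
  · intro a ha b hb hab
    by_cases haT : a ∈ T
    · exact hg.out a haT (hab ▸ hhK b hb)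
    · have := (mem_sdiff.1 (hh b hb)).2
      rw [mem_erase] at ha
      exact this (hab ▸ mem_image_of_mem g (by simp [ha, haT]))
  · intro a ha b hb hbn hab
    rw [mem_erase] at ha
    by_cases haT : a ∈ T
    · have : b ∈ cl H T := mem_cl.2 (Or.inr ⟨a, haT, hab⟩)
      rw [hD, mem_sdiff] at hb
      exact absurd this hb.2
    · exact hK _ (hg.ins a ha.2 haT) _ (hhK b hb)

lemma dc (A B : Finset V) :
    ∑ a ∈ A, (B.filter (H.Adj a)).card = ∑ b ∈ B, (A.filter (H.Adj b)).card := by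
  have := sum_card_bipartiteAbove_eq_sum_card_bipartiteBelow (s := A) (t := B) H.Adj
  unfold bipartiteAbove bipartiteBelow at this
  rw [this]
  refine sum_congr rfl fun b _ => congrArg card ?_
  ext a; simp [H.adj_comm]

/-- removing hubs from a vertex cover -/
lemma hubW (M : Finset V) (hM : ∀ a b, a ∉ M → b ∉ M → ¬ H.Adj a b) (f : ℕ) (hf : f ≤ M.card) :
    ∃ W ⊆ M, W.card = f ∧ M.card * e2 H Wᶜ ≤ (M.card - f) * e2 H univ := by
  induction f with
  | zero => exact ⟨∅, empty_subset _, rfl, by simp⟩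
  | succ f ih =>
    obtain ⟨W, hWM, hW, hWe⟩ := ih (by omega)
    have hcard : (M \ W).card = M.card - f := by rw [card_sdiff_of_subset hWM, hW]
    have hne : (M \ W).Nonempty := card_pos.1 (by omega)
    obtain ⟨u, hu, hmax⟩ := exists_max_image (M \ W) (fun u => (Wᶜ.filter (H.Adj u)).card) hne
    rw [mem_sdiff] at hu
    have hsum : e2 H Wᶜ ≤ 2 * ∑ u ∈ M \ W, (Wᶜ.filter (H.Adj u)).card := by
      have hsub : M \ W ⊆ Wᶜ := fun x hx => by rw [mem_sdiff] at hx; simpa using hx.2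
      unfold e2
      rw [← sum_sdiff hsub, dc, two_mul]
      apply Nat.add_le_add_right
      rw [← sum_sdiff hsub]
      have hz : ∑ b ∈ Wᶜ \ (M \ W), ((Wᶜ \ (M \ W)).filter (H.Adj b)).card = 0 := by
        apply sum_eq_zero
        intro b hb
        rw [card_eq_zero, filter_eq_empty_iff]
        intro a ha
        simp only [mem_sdiff, mem_compl] at ha hb
        exact hM b a (by tauto) (by tauto)
      rw [hz, zero_add]
      exact sum_le_sum fun b _ => card_le_card (filter_subset_filter _ sdiff_subset)
    have hb : ∑ u ∈ M \ W, (Wᶜ.filter (H.Adj u)).card ≤ (M \ W).card * (Wᶜ.filter (H.Adj u)).card := by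
      rw [← smul_eq_mul]; exact sum_le_card_nsmul _ _ _ hmax
    rw [hcard] at hb
    have huW : u ∈ Wᶜ := by simpa using hu.2
    have he := e2_erase (H := H) huW
    refine ⟨insert u W, insert_subset hu.1 hWM, by rw [card_insert_of_notMem hu.2, hW], ?_⟩
    rw [compl_insert]
    obtain ⟨k, hk⟩ := Nat.exists_eq_add_of_le hf
    have h1 : M.card - f = k + 1 := by omega
    have h2 : M.card - (f+1) = k := by omega
    rw [h1] at hWe hb
    rw [h2]
    set x := (Wᶜ.filter (H.Adj u)).card
    set m := M.card
    have h3 : (k+1) * e2 H (Wᶜ.erase u) ≤ k * e2 H Wᶜ := by nlinarith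
    have h4 : (k+1) * (m * e2 H (Wᶜ.erase u)) ≤ (k+1) * (k * e2 H univ) := by
      calc _ = m * ((k+1) * e2 H (Wᶜ.erase u)) := by ring
        _ ≤ m * (k * e2 H Wᶜ) := Nat.mul_le_mul_left _ h3
        _ = k * (m * e2 H Wᶜ) := by ring
        _ ≤ k * ((k+1) * e2 H univ) := Nat.mul_le_mul_left _ hWe
        _ = _ := by ring
    exact Nat.le_of_mul_le_mul_left h4 (by omega)

end RK4

set_option linter.unusedSectionVars false
set_option linter.unusedVariables false

section RK5
open Finset

variable {V β : Type} [Fintype V] [DecidableEq V] [Fintype β] [DecidableEq β]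

inductive Valid (H : SimpleGraph V) [DecidableRel H.Adj] (d : ℕ) : Finset V → Prop
  | nil : Valid H d ∅
  | cons (T : Finset V) (v w : V) : Valid H d T → (nb H v).card = d → H.Adj v w → w ∉ NT H T →
      Valid H d (insert v T)

def Hub (H : SimpleGraph V) [DecidableRel H.Adj] (d : ℕ) : Finset V :=
  univ.filter (fun v => (nb H v).card ≠ d)

def sS (H : SimpleGraph V) [DecidableRel H.Adj] (d : ℕ) (S : Finset V) : ℕ :=
  ∑ u ∈ S, ((nb H u).card - d)

def IS (H : SimpleGraph V) [DecidableRel H.Adj] (d : ℕ) (S : Finset V) : Finset V :=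
  univ.filter (fun v => (nb H v).card = d ∧ nb H v ⊆ S)

variable {H : SimpleGraph V} [DecidableRel H.Adj] {C : SimpleGraph β} [DecidableRel C.Adj]
variable {K : Finset β} {d s t : ℕ}

lemma mem_Hub {v : V} : v ∈ Hub H d ↔ (nb H v).card ≠ d := by simp [Hub]

lemma sum_deg (dmin : ∀ v, d ≤ (nb H v).card) (S : Finset V) :
    ∑ u ∈ S, (nb H u).card = d * S.card + sS H d S := by
  unfold sS
  rw [mul_comm, ← smul_eq_mul, ← sum_const, ← sum_add_distrib]
  refine sum_congr rfl fun u _ => ?_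
  have := dmin u; omega

lemma Cx.sS_univ (c : Cx H C K d s t) : sS H d univ = s := by
  have h1 := sum_deg c.dmin (univ : Finset V)
  have h2 := c.hs
  rw [e2_univ, h1, card_univ] at h2
  omega

lemma Cx.sS_le (c : Cx H C K d s t) (S : Finset V) : sS H d S ≤ s := by
  rw [← c.sS_univ]; exact sum_le_sum_of_subset (subset_univ _)

lemma hub_le (dmin : ∀ v, d ≤ (nb H v).card) {S : Finset V} (hS : S ⊆ Hub H d) :
    S.card ≤ sS H d S := by
  unfold sS
  rw [card_eq_sum_ones]
  refine sum_le_sum fun u hu => ?_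
  have := mem_Hub.1 (hS hu)
  have := dmin u
  omega

lemma IS_count (dmin : ∀ v, d ≤ (nb H v).card) (S : Finset V) :
    d * (IS H d S).card + ∑ u ∈ S, ((IS H d S)ᶜ.filter (H.Adj u)).card = d * S.card + sS H d S := by
  rw [← sum_deg dmin]
  have h1 : d * (IS H d S).card = ∑ v ∈ IS H d S, (S.filter (H.Adj v)).card := by
    rw [mul_comm, ← smul_eq_mul, ← sum_const]
    refine sum_congr rfl fun v hv => ?_
    simp only [IS, mem_filter, mem_univ, true_and] at hv
    rw [← hv.1]
    congr 1
    ext u; simp only [mem_nb, mem_filter]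
    exact ⟨fun h => ⟨hv.2 (mem_nb.2 h), h⟩, fun h => h.2⟩
  rw [h1, dc, ← sum_add_distrib]
  refine sum_congr rfl fun u _ => ?_
  rw [← card_union_of_disjoint]
  · congr 1; ext w; simp only [mem_union, mem_filter, mem_compl, mem_nb]; tauto
  · exact disjoint_filter_filter disjoint_compl_right

lemma num1 {d i x m sc : ℕ} (hd : 2 ≤ d) (hi : 1 ≤ i) (h1 : m ≤ (d-1)*i+1) (h2 : m ≤ sc)
    (h3 : d * x + 1 ≤ d * m + sc) : x + m ≤ d * i + sc := by
  by_contra hcon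
  push Not at hcon
  obtain ⟨r, rfl⟩ := Nat.exists_eq_add_of_le hd
  obtain ⟨z, rfl⟩ := Nat.exists_eq_add_of_le h2
  rw [show 2 + r - 1 = r + 1 by omega] at h1
  have hx : i + (m + z) ≤ x := by nlinarith
  have := Nat.mul_le_mul_left (2+r) hx
  nlinarith [Nat.zero_le (r*z)]

lemma num2 {d i x m sc : ℕ} (hd : 2 ≤ d) (hi : 1 ≤ i) (h1 : m ≤ (d-1)*i+1) (h2 : m ≤ sc)
    (h3 : d * x ≤ d * m + sc) : x + m ≤ d * i + sc + 1 := by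
  by_contra hcon
  push Not at hcon
  obtain ⟨r, rfl⟩ := Nat.exists_eq_add_of_le hd
  obtain ⟨z, rfl⟩ := Nat.exists_eq_add_of_le h2
  rw [show 2 + r - 1 = r + 1 by omega] at h1
  have hx : i + (m + z) + 1 ≤ x := by nlinarith
  have := Nat.mul_le_mul_left (2+r) hx
  nlinarith [Nat.zero_le (r*z)]

lemma NT_insert {T : Finset V} {v : V} : NT H (insert v T) = nb H v ∪ NT H T := by
  simp [NT]

lemma NT_union {T S : Finset V} : NT H (S ∪ T) = NT H S ∪ NT H T := by
  simp [NT, union_biUnion]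

lemma Cx.valid_exists (c : Cx H C K d s t)
    (hind : ∀ v w, H.Adj v w → (nb H v).card = d → (nb H w).card ≠ d) :
    ∃ T, Valid H d T ∧ Fintype.card V ≤ d * T.card + s + 1 := by
  classical
  by_contra hcon
  push Not at hcon
  have hd2 := c.d2
  set M := Hub H d with hM
  let cls : Finset V → Prop := fun S => ∀ v, (nb H v).card = d → ∀ u ∈ nb H v, u ∈ S → nb H v ⊆ S
  let Data : Finset V → Prop := fun S => S ⊆ M ∧ cls S ∧
    ∃ T, Valid H d T ∧ NT H T ⊆ S ∧ (IS H d S).card + S.card ≤ d * T.card + sS H d S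
  have hpos : ∀ v, (nb H v).Nonempty := fun v => by
    have := c.dmin v; rw [← card_pos]; omega
  have hD0 : Data ∅ := by
    refine ⟨empty_subset _, ?_, ∅, Valid.nil, by simp [NT], ?_⟩
    · intro v _ u _ hu; simp at hu
    · have : IS H d ∅ = ∅ := by
        simp only [IS, filter_eq_empty_iff, mem_univ, true_implies, subset_empty]
        rintro v ⟨-, h⟩; exact (hpos v).ne_empty h
      simp [this]
  obtain ⟨S, hS, hSmax⟩ := exists_max_image (univ.filter Data) card ⟨∅, by simpa using hD0⟩
  rw [mem_filter] at hS
  obtain ⟨-, hSM, hScl, T, hT, hTS, hbd⟩ := hS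
  have hSmax' : ∀ S', Data S' → S'.card ≤ S.card := fun S' h => hSmax S' (by simpa using h)
  have hne : ∃ u ∈ M, u ∉ S := by
    by_contra hh
    push Not at hh
    have hSeq : S = M := Subset.antisymm hSM hh
    have : IS H d M = Mᶜ := by
      ext v
      simp only [IS, mem_filter, mem_univ, true_and, mem_compl, hM, mem_Hub, not_not]
      refine ⟨fun h => h.1, fun h => ⟨h, fun w hw => ?_⟩⟩
      rw [mem_Hub]; exact hind v w (mem_nb.1 hw) h
    rw [hSeq, this, card_compl] at hbd
    have h1 := hcon T hT
    have h2 := c.sS_le M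
    have h3 : M.card ≤ Fintype.card V := card_le_univ _
    omega
  obtain ⟨u, huM, huS⟩ := hne
  by_cases hui : ∃ v, (nb H v).card = d ∧ H.Adj v u
  · obtain ⟨v0, hv0, hv0u⟩ := hui
    have hv0S : Disjoint (nb H v0) S := by
      rw [disjoint_left]; intro a ha haS
      exact huS (hScl v0 hv0 a ha haS (mem_nb.2 hv0u))
    let Blk : Finset V → Prop := fun T' => T'.Nonempty ∧ (∀ v ∈ T', (nb H v).card = d) ∧
      Disjoint (NT H T') S ∧ Valid H d (T' ∪ T) ∧ (NT H T').card ≤ (d-1) * T'.card + 1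
    have hB0 : Blk {v0} := by
      refine ⟨singleton_nonempty _, by simpa using hv0, by simpa [NT] using hv0S, ?_, ?_⟩
      · rw [singleton_union]
        exact Valid.cons T v0 u hT hv0 hv0u (fun h => huS (hTS h))
      · simp [NT]; omega
    obtain ⟨T', hT', hT'max⟩ := exists_max_image (univ.filter Blk) card ⟨_, by simpa using hB0⟩
    rw [mem_filter] at hT'
    obtain ⟨-, hTne, hTd, hTdis, hTval, hTc⟩ := hT'
    set Mc := NT H T' with hMc
    have hMcM : Mc ⊆ M := by
      intro w hw
      rw [hMc, mem_NT] at hw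
      obtain ⟨v, hv, hvw⟩ := hw
      rw [hM, mem_Hub]; exact hind v w hvw (hTd v hv)
    have hMccl : cls Mc := by
      intro v hv a ha haM
      by_contra hnot
      rw [not_subset] at hnot
      obtain ⟨w, hw, hwM⟩ := hnot
      have hvT : v ∉ T' := fun h => hwM (by rw [hMc, mem_NT]; exact ⟨v, h, mem_nb.1 hw⟩)
      have hvS : Disjoint (nb H v) S := by
        rw [disjoint_left]; intro b hb hbS
        exact disjoint_left.1 hTdis haM (hScl v hv b hb hbS ha)
      have : Blk (insert v T') := by
        refine ⟨insert_nonempty _ _, ?_, ?_, ?_, ?_⟩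
        · intro b hb; rcases mem_insert.1 hb with rfl | hb
          · exact hv
          · exact hTd b hb
        · rw [NT_insert, disjoint_union_left]; exact ⟨hvS, hTdis⟩
        · rw [insert_union]
          refine Valid.cons _ v w hTval hv (mem_nb.1 hw) ?_
          rw [NT_union, mem_union]
          rintro (h | h)
          · exact hwM h
          · exact disjoint_left.1 hvS hw (hTS h)
        · rw [NT_insert, ← hMc, card_insert_of_notMem hvT]
          have h1 : (nb H v ∪ Mc).card + (nb H v ∩ Mc).card = (nb H v).card + Mc.card :=
            card_union_add_card_inter _ _
          have h2 : 0 < (nb H v ∩ Mc).card := card_pos.2 ⟨a, mem_inter.2 ⟨ha, haM⟩⟩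
          have h3 : (d-1) * (T'.card + 1) = (d-1) * T'.card + (d-1) := by ring
          omega
      have h1 := hT'max (insert v T') (by simpa using this)
      rw [card_insert_of_notMem hvT] at h1
      omega
    have hcount := IS_count c.dmin Mc
    have hml := hub_le c.dmin hMcM
    have hi1 : 1 ≤ T'.card := card_pos.2 hTne
    have hTT : Disjoint T' T := by
      rw [disjoint_left]; intro v hv hvT
      obtain ⟨w, hw⟩ := hpos v
      exact disjoint_left.1 hTdis (mem_NT.2 ⟨v, hv, mem_nb.1 hw⟩) (hTS (mem_NT.2 ⟨v, hvT, mem_nb.1 hw⟩))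
    have hTTc : (T' ∪ T).card = T'.card + T.card := card_union_of_disjoint hTT
    have hMcne : Mc.Nonempty := by
      obtain ⟨v, hv⟩ := hTne
      obtain ⟨w, hw⟩ := hpos v
      exact ⟨w, mem_NT.2 ⟨v, hv, mem_nb.1 hw⟩⟩
    by_cases hall : Mc ∪ IS H d Mc = univ
    · have h1 := num2 (x := (IS H d Mc).card) hd2 hi1 hTc hml (by omega)
      have h2 := hcon _ hTval
      rw [hTTc, mul_add] at h2
      have h3 := card_union_le Mc (IS H d Mc)
      rw [hall, card_univ] at h3
      have h4 := c.sS_le Mc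
      omega
    · have hcr : 1 ≤ ∑ u ∈ Mc, ((IS H d Mc)ᶜ.filter (H.Adj u)).card := by
        obtain ⟨a, ha, b, hb, hab⟩ := c.conn (Mc ∪ IS H d Mc) (hMcne.mono subset_union_left) hall
        rw [mem_union] at ha hb
        push Not at hb
        have haM : a ∈ Mc := by
          rcases ha with ha | ha
          · exact ha
          · simp only [IS, mem_filter] at ha
            exact absurd (ha.2.2 (mem_nb.2 hab)) hb.1
        refine le_trans ?_ (single_le_sum (f := fun u => ((IS H d Mc)ᶜ.filter (H.Adj u)).card)
          (fun _ _ => Nat.zero_le _) haM)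
        exact card_pos.2 ⟨b, mem_filter.2 ⟨mem_compl.2 hb.2, hab⟩⟩
      have h1 := num1 (x := (IS H d Mc).card) hd2 hi1 hTc hml (by omega)
      have hdis : Disjoint Mc S := hTdis
      have hcS : (Mc ∪ S).card = Mc.card + S.card := card_union_of_disjoint hdis
      have hsS : sS H d (Mc ∪ S) = sS H d Mc + sS H d S := sum_union hdis
      have hIS : IS H d (Mc ∪ S) ⊆ IS H d Mc ∪ IS H d S := by
        intro v hv
        simp only [IS, mem_filter, mem_univ, true_and, mem_union] at hv ⊢
        obtain ⟨w, hw⟩ := hpos v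
        rcases mem_union.1 (hv.2 hw) with h | h
        · exact Or.inl ⟨hv.1, hMccl v hv.1 w hw h⟩
        · exact Or.inr ⟨hv.1, hScl v hv.1 w hw h⟩
      have hISc := (card_le_card hIS).trans (card_union_le _ _)
      have := hSmax' (Mc ∪ S) ⟨union_subset hMcM hSM, ?_, T' ∪ T, hTval, ?_, ?_⟩
      · have := card_pos.2 hMcne
        omega
      · intro v hv w hw hwS
        rcases mem_union.1 hwS with h | h
        · exact (hMccl v hv w hw h).trans subset_union_left
        · exact (hScl v hv w hw h).trans subset_union_right
      · rw [NT_union]; exact union_subset_union Subset.rfl hTS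
      · rw [hTTc, hcS, hsS, mul_add]; omega
  · push Not at hui
    have h1 := hSmax' (insert u S) ⟨insert_subset huM hSM, ?_, T, hT, hTS.trans (subset_insert _ _), ?_⟩
    · rw [card_insert_of_notMem huS] at h1; omega
    · intro v hv w hw hwS
      rcases mem_insert.1 hwS with rfl | h
      · exact absurd (mem_nb.1 hw) (hui v hv)
      · exact (hScl v hv w hw h).trans (subset_insert _ _)
    · have hIS : IS H d (insert u S) ⊆ IS H d S := by
        intro v hv
        simp only [IS, mem_filter, mem_univ, true_and] at hv ⊢
        refine ⟨hv.1, fun w hw => ?_⟩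
        rcases mem_insert.1 (hv.2 hw) with rfl | h
        · exact absurd (mem_nb.1 hw) (hui v hv.1)
        · exact h
      have h2 := card_le_card hIS
      have h3 : sS H d (insert u S) = ((nb H u).card - d) + sS H d S := sum_insert huS
      have h4 := mem_Hub.1 huM
      have h5 := c.dmin u
      rw [card_insert_of_notMem huS, h3]
      omega

end RK5

set_option linter.unusedSectionVars false
set_option linter.unusedVariables false

section RK6
open Finset

variable {V β : Type} [Fintype V] [DecidableEq V] [Fintype β] [DecidableEq β]
variable {H : SimpleGraph V} [DecidableRel H.Adj] {C : SimpleGraph β} [DecidableRel C.Adj]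
variable {K : Finset β} {d s t : ℕ}

lemma Cx.hub_red (c : Cx H C K d s t)
    (hind : ∀ v w, H.Adj v w → (nb H v).card = d → (nb H w).card ≠ d)
    (F Z : Finset β) (hred : ∀ x ∈ F, ∀ y ∈ Z, C.Adj x y)
    (hF : (Hub H d).card ≤ d * F.card) (hZ : (Hub H d).card ≤ Z.card)
    (hm : 1 ≤ (Hub H d).card) : False := by
  set M := Hub H d with hM
  have hcov : ∀ a b, a ∉ M → b ∉ M → ¬ H.Adj a b := by
    intro a b ha hb hab
    rw [hM, mem_Hub, not_not] at ha hb
    exact hind a b hab ha hb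
  set f := min F.card M.card with hf
  have hdf : M.card ≤ d * f := by
    rcases le_total F.card M.card with h | h
    · rw [hf, min_eq_left h]; exact hF
    · rw [hf, min_eq_right h]
      have := c.d2
      nlinarith
  have hf1 : 1 ≤ f := by
    rcases Nat.eq_zero_or_pos f with h | h
    · rw [h] at hdf; omega
    · exact h
  obtain ⟨W, hWM, hW, hWe⟩ := hubW (H := H) M hcov f (min_le_right _ _)
  obtain ⟨X, hXF, hX⟩ := exists_subset_card_eq (min_le_left F.card M.card)
  obtain ⟨E, hEZ, hE⟩ := exists_subset_card_eq hZ
  have hms : M.card ≤ s := (hub_le c.dmin (Subset.refl _)).trans (c.sS_le _)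
  have hkey := c.key
  have hcM : Mᶜ.card = Fintype.card V - M.card := card_compl _
  have hcW : Wᶜ.card = Fintype.card V - f := by rw [card_compl, hW]
  have heM : e2 H Mᶜ = 0 := by
    unfold e2
    apply sum_eq_zero
    intro b hb
    rw [card_eq_zero, filter_eq_empty_iff]
    intro a ha
    exact hcov b a (mem_compl.1 hb) (mem_compl.1 ha)
  have hb := c.c.bijoin X E (fun x hx y hy => hred x (hXF hx) y (hEZ hy)) W M
    (card_pos.1 (by omega)) (card_pos.1 (by omega)) (by omega) (by omega)
    (max (e2 H Wᶜ) (Fintype.card V - f - 1)) (Fintype.card V - M.card - 1)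
    (by omega) (by omega) (by omega) (by omega)
  have hN := c.NN
  have hd2 := c.d2
  have hs := c.hs
  have h2n : 2 * Fintype.card V ≤ d * Fintype.card V := Nat.mul_le_mul_right _ hd2
  have hX' : X.card = f := hX
  have hfM : f ≤ M.card := min_le_right _ _
  rcases le_total (e2 H Wᶜ) (Fintype.card V - f - 1) with h | h
  · rw [max_eq_right h] at hb
    omega
  · rw [max_eq_left h] at hb
    have hb' : e2 H univ + 2 ≤ f + e2 H Wᶜ + Fintype.card V := by omega
    obtain ⟨k, hk⟩ := Nat.exists_eq_add_of_le hfM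
    rw [show M.card - f = k by omega] at hWe
    have hnn : d * Fintype.card V + M.card ≤ e2 H univ := by omega
    generalize e2 H univ = Q at *
    generalize e2 H Wᶜ = q at *
    generalize M.card = m at *
    generalize Fintype.card V = n at *
    clear_value f
    have h1 : m * (Q + 2) ≤ m * (f + q + n) := Nat.mul_le_mul_left _ hb'
    have h2 : f * (d * n + m) ≤ f * Q := Nat.mul_le_mul_left _ hnn
    have h3 : m * n ≤ d * f * n := Nat.mul_le_mul_right _ hdf
    have h4 : m * Q = f * Q + k * Q := by rw [hk]; ring
    nlinarith

lemma num3 {n w d s t m f p : ℕ} (hd : 2 ≤ d) (ht : 1 ≤ t) (hn : w + t = n)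
    (hkey : d * t + s + 2 ≤ n) (hms : m ≤ s) (h1 : p ≤ m) (h2 : p ≤ d * t)
    (hf : w + 1 ≤ f + p) : m ≤ d * f := by
  obtain ⟨r, rfl⟩ := Nat.exists_eq_add_of_le hd
  rcases le_total m ((2+r) * t) with h | h
  · have : (r+1)*t + 3 ≤ f := by nlinarith
    nlinarith [Nat.mul_le_mul_left (2+r) this, Nat.zero_le (r*t), Nat.zero_le (r*(r*t))]
  · have : m + 3 ≤ f + t := by omega
    have h3 := Nat.mul_le_mul_left (2+r) this
    have : (r + 1) * m ≥ (2+r) * t := by nlinarith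
    nlinarith

lemma Cx.step_indep (c : Cx H C K d s t)
    (hind : ∀ v w, H.Adj v w → (nb H v).card = d → (nb H w).card ≠ d)
    {T : Finset V} {g : V → β} (hg : StG H C K T g) (hT : ∀ v ∈ T, (nb H v).card = d)
    (hTt : T.card < t) {v w : V} (hv : (nb H v).card = d) (hvw : H.Adj v w) (hw : w ∉ NT H T) :
    ∃ g', StG H C K (insert v T) g' := by
  by_contra hcon
  set M := Hub H d with hM
  have hwM : w ∈ M := mem_Hub.2 (hind v w hvw hv)
  have hvT : v ∉ T := fun h => hw (mem_NT.2 ⟨v, h, hvw⟩)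
  have hclT : cl H T \ T = NT H T := by
    ext u
    simp only [cl, mem_sdiff, mem_union]
    refine ⟨by tauto, fun h => ⟨Or.inr h, fun hu => ?_⟩⟩
    obtain ⟨x, hx, hxu⟩ := mem_NT.1 h
    exact hind x u hxu (hT x hx) (hT u hu)
  have hvcl : v ∉ NT H T := by
    intro h
    obtain ⟨x, hx, hxu⟩ := mem_NT.1 h
    exact hind x v hxu (hT x hx) hv
  set D := nb H v \ cl H T with hD
  have hDM : D ⊆ M := fun u hu => by
    rw [hD, mem_sdiff, mem_nb] at hu
    exact mem_Hub.2 (hind v u hu.1 hv)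
  have hNM : NT H T ⊆ M := fun u hu => by
    obtain ⟨x, hx, hxu⟩ := mem_NT.1 hu
    exact mem_Hub.2 (hind x u hxu (hT x hx))
  have hdis : Disjoint D (NT H T) := by
    rw [disjoint_left]; intro u hu hu'
    rw [hD, mem_sdiff, cl, mem_union] at hu; tauto
  have hwD : w ∈ D := by
    rw [hD, mem_sdiff, mem_nb, cl, mem_union]
    refine ⟨hvw, ?_⟩
    rintro (h | h)
    · exact mem_Hub.1 hwM (hT w h)
    · exact hw h
  have hp1 : D.card + (NT H T).card ≤ M.card := by
    rw [← card_union_of_disjoint hdis]; exact card_le_card (union_subset hDM hNM)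
  have hDd : D.card ≤ d := hv ▸ card_le_card sdiff_subset
  have hNd : (NT H T).card ≤ T.card * d := card_biUnion_le_card_mul _ _ _ (fun u hu => (hT u hu).le)
  have hp2 : D.card + (NT H T).card ≤ d * t := by
    have : (T.card + 1) * d ≤ t * d := Nat.mul_le_mul_right _ hTt
    nlinarith
  have hms : M.card ≤ s := (hub_le c.dmin (Subset.refl _)).trans (c.sS_le _)
  have hkey := c.key; have hht := c.ht; have ht1 := c.t1; have hd2 := c.d2; have hN := c.NN
  have h2t : 2 * t ≤ d * t := Nat.mul_le_mul_right _ hd2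
  have hD1 : 1 ≤ D.card := card_pos.2 ⟨w, hwD⟩
  have hM1 : 1 ≤ M.card := card_pos.2 ⟨w, hwM⟩
  set F0 := K \ (NT H T).image g with hF0
  have hF0c : K.card - (NT H T).card ≤ F0.card :=
    (Nat.sub_le_sub_left card_image_le _).trans (le_card_sdiff _ _)
  have hDe : (D.erase w).card = D.card - 1 := card_erase_of_mem hwD
  have hpK : D.card + (NT H T).card ≤ K.card := by omega
  obtain ⟨h0, hh0, hi0⟩ := exists_inj (D.erase w) F0 (card_pos.1 (by omega)) (by omega)
  set F := F0 \ (D.erase w).image h0 with hFdef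
  have hFc : F0.card - (D.erase w).card ≤ F.card :=
    (Nat.sub_le_sub_left card_image_le _).trans (le_card_sdiff _ _)
  set g0 : V → β := fun a => if a ∈ cl H T then g a else h0 a with hg0
  have hcb := count_blue (C := C) c.nbK (K ∪ T.image g) ((nb H v).erase w) g0
  set Z := (univ \ (K ∪ T.image g)).filter (fun y => ∀ u ∈ (nb H v).erase w, ¬ C.Adj (g0 u) y) with hZ
  have hcK : (K ∪ T.image g).card ≤ K.card + (t - 1) :=
    (card_union_le _ _).trans (Nat.add_le_add_left (card_image_le.trans (by omega)) _)
  rw [card_erase_of_mem (mem_nb.2 hvw), hv] at hcb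
  have hmul : d * Fintype.card V = (d - 1) * K.card + K.card + d * t := by
    obtain ⟨r, rfl⟩ := Nat.exists_eq_add_of_le hd2
    rw [show 2 + r - 1 = r + 1 by omega, ← hht]; ring
  have hZc : M.card ≤ Z.card := by omega
  refine c.hub_red hind F Z ?_ ?_ hZc hM1
  · intro x hx y hy
    by_contra hxy
    apply hcon
    rw [hFdef, mem_sdiff] at hx
    rw [hZ, mem_filter, mem_sdiff, mem_union] at hy
    push Not at hy
    have hx0 : ∀ u ∈ D.erase w, h0 u ≠ x := fun u hu h => hx.2 (h ▸ mem_image_of_mem h0 hu)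
    refine hg.step c.Ki hvT (Function.update h0 w x) y ?_ ?_ hy.1.2.1 ?_ ?_ ?_
    · rw [← hD]
      intro a ha b hb hab
      have ha : a ∈ D := ha
      have hb : b ∈ D := hb
      by_cases haw : a = w <;> by_cases hbw : b = w
      · rw [haw, hbw]
      · rw [haw, Function.update_self, Function.update_of_ne hbw] at hab
        exact absurd hab.symm (hx0 b (mem_erase.2 ⟨hbw, hb⟩))
      · rw [hbw, Function.update_self, Function.update_of_ne haw] at hab
        exact absurd hab (hx0 a (mem_erase.2 ⟨haw, ha⟩))
      · rw [Function.update_of_ne haw, Function.update_of_ne hbw] at hab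
        exact hi0 (mem_erase.2 ⟨haw, ha⟩) (mem_erase.2 ⟨hbw, hb⟩) hab
    · intro u hu
      rw [hclT, erase_eq_of_notMem hvcl]
      by_cases huw : u = w
      · rw [huw, Function.update_self]; exact hx.1
      · rw [Function.update_of_ne huw]; exact hh0 u (mem_erase.2 ⟨huw, hu⟩)
    · intro a ha h; exact hy.1.2.2 (h ▸ mem_image_of_mem g ha)
    · intro a ha hva
      have := hy.2 a (mem_erase.2 ⟨?_, mem_nb.2 hva⟩)
      · rw [hg0] at this; simpa [ha] using this
      · rintro rfl
        rw [hD, mem_sdiff] at hwD; exact hwD.2 ha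
    · intro u hu
      by_cases huw : u = w
      · rw [huw, Function.update_self]; exact hxy
      · rw [Function.update_of_ne huw]
        rw [mem_sdiff] at hu
        have := hy.2 u (mem_erase.2 ⟨huw, hu.1⟩)
        rw [hg0] at this; simpa [hu.2] using this
  · exact num3 (p := D.card + (NT H T).card) hd2 ht1 hht hkey hms hp1 hp2 (by omega)

lemma Cx.case_indep (c : Cx H C K d s t)
    (hind : ∀ v w, H.Adj v w → (nb H v).card = d → (nb H w).card ≠ d) : False := by
  have hβ : Nonempty β := by
    rw [← Fintype.card_pos_iff]; have := c.NN; omega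
  obtain ⟨b⟩ := hβ
  have main : ∀ T, Valid H d T → (∀ v ∈ T, (nb H v).card = d) ∧ T.card < t ∧ ∃ g, StG H C K T g := by
    intro T hT
    induction hT with
    | nil => exact ⟨by simp, by have := c.t1; simp; omega, fun _ => b, StG.empty _⟩
    | cons T v w hT hv hvw hw ih =>
      obtain ⟨h1, h2, g, hg⟩ := ih
      obtain ⟨g', hg'⟩ := c.step_indep hind hg h1 h2 hv hvw hw
      refine ⟨?_, ?_, g', hg'⟩
      · intro a ha
        rcases mem_insert.1 ha with rfl | ha
        · exact hv
        · exact h1 a ha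
      · by_contra hcon
        exact c.finish hg' (by omega)
  obtain ⟨T, hT, hTn⟩ := c.valid_exists hind
  obtain ⟨-, h2, -⟩ := main T hT
  have hkey := c.key
  have : d * T.card ≤ d * t := Nat.mul_le_mul_left _ h2.le
  omega

end RK6

set_option linter.unusedSectionVars false
set_option linter.unusedVariables false

section RK7
open Finset

variable {V β : Type} [Fintype V] [DecidableEq V] [Fintype β] [DecidableEq β]
variable {H : SimpleGraph V} [DecidableRel H.Adj] {C : SimpleGraph β} [DecidableRel C.Adj]
variable {K : Finset β} {d s t : ℕ}

lemma cl_sdiff_card {T : Finset V} (hT : ∀ v ∈ T, (nb H v).card = d) :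
    (cl H T \ T).card ≤ d * T.card := by
  rw [mul_comm]
  refine le_trans (card_le_card (t := NT H T) ?_)
    (card_biUnion_le_card_mul _ _ _ (fun u hu => (hT u hu).le))
  intro u hu
  rw [mem_sdiff, cl, mem_union] at hu; tauto

lemma Cx.step6 (c : Cx H C K d s t) (h3 : 3 * ((d-1)*t+s+3) < Fintype.card V)
    {T : Finset V} {g : V → β} (hg : StG H C K T g) (hT : ∀ v ∈ T, (nb H v).card = d)
    (hTt : T.card < t) {v : V} (hv : (nb H v).card = d) (hvT : v ∉ T)
    (ha : (nb H v ∩ cl H T).card + 2 ≤ d) : ∃ g', StG H C K (insert v T) g' := by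
  set P := cl H T \ T with hP
  set D := nb H v \ cl H T with hD
  have hPc : P.card ≤ d * T.card := cl_sdiff_card hT
  have hDc : D.card + (nb H v ∩ cl H T).card = d := by rw [← hv]; exact card_sdiff_add_card_inter _ _
  have hkey := c.key; have hht := c.ht; have ht1 := c.t1; have hd2 := c.d2; have hN := c.NN
  set F := K \ (P.erase v).image g with hF
  have hFc : K.card - P.card ≤ F.card := by
    have h1 : ((P.erase v).image g).card ≤ P.card := card_image_le.trans (card_le_card (erase_subset _ _))
    have h2 : K.card - ((P.erase v).image g).card ≤ F.card := le_card_sdiff _ _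
    omega
  have hF2 : 2 * d ≤ F.card := by
    obtain ⟨r, rfl⟩ := Nat.exists_eq_add_of_le hd2
    rw [show 2 + r - 1 = r + 1 by omega] at h3
    have h4 : (2+r) * (T.card + 1) ≤ (2 + r) * t := Nat.mul_le_mul_left _ hTt
    have h5 : r * 1 ≤ r * t := Nat.mul_le_mul_left _ ht1
    have h6 : P.card + 2 * (2 + r) ≤ K.card := by nlinarith
    omega
  set L := univ.filter (fun y => (F \ nb C y).card < D.card) with hL
  have hLi : Indep C L := by
    intro y hy z hz hyz
    rw [hL, mem_filter] at hy hz
    have : F ⊆ (F \ nb C y) ∪ (F \ nb C z) := by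
      intro x hx
      simp only [mem_union, mem_sdiff, mem_nb]
      by_contra hh
      push Not at hh
      exact c.c.tf x y z (hh.1 hx).symm hyz (hh.2 hx).symm
    have h1 := (card_le_card this).trans (card_union_le _ _)
    omega
  have hLc := c.Kmax L hLi
  have hcb := count_blue (C := C) c.nbK (K ∪ (T.image g ∪ L)) (nb H v ∩ cl H T) g
  have hB : (K ∪ (T.image g ∪ L)).card ≤ K.card + ((t-1) + K.card) := by
    have h1 := card_union_le K (T.image g ∪ L)
    have h2 := card_union_le (T.image g) L
    have h4 : (T.image g).card ≤ T.card := card_image_le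
    omega
  have hmul : (nb H v ∩ cl H T).card * K.card + 2 * K.card ≤ d * K.card := by
    have := Nat.mul_le_mul_right K.card ha
    rwa [add_mul] at this
  have hmul2 : d * Fintype.card V = d * K.card + d * t := by rw [← hht]; ring
  have h2t : 2 * t ≤ d * t := Nat.mul_le_mul_right _ hd2
  obtain ⟨y, hy⟩ := card_pos.1 (show 0 < ((univ \ (K ∪ (T.image g ∪ L))).filter
    (fun y => ∀ u ∈ nb H v ∩ cl H T, ¬ C.Adj (g u) y)).card by omega)
  simp only [mem_filter, mem_sdiff, mem_univ, true_and, mem_union] at hy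
  push Not at hy
  obtain ⟨⟨hyK, hyT, hyL⟩, hyb⟩ := hy
  have hyc : D.card ≤ (F \ nb C y).card := by
    by_contra hh; exact hyL (by rw [hL, mem_filter]; exact ⟨mem_univ _, by omega⟩)
  obtain ⟨h, hh, hi⟩ := exists_inj' D (F \ nb C y) (card_pos.1 (by omega)) hyc
  refine hg.step c.Ki hvT h y hi (fun u hu => (mem_sdiff.1 (hh u hu)).1) hyK
    (fun a ha h => hyT (h ▸ mem_image_of_mem g ha))
    (fun a ha hva => hyb a (mem_inter.2 ⟨mem_nb.2 hva, ha⟩)) ?_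
  intro u hu h
  have := (mem_sdiff.1 (hh u hu)).2
  exact this (mem_nb.2 h.symm)

lemma Cx.case_big (c : Cx H C K d s t) (hd3 : 3 ≤ d) (h3 : 3 * ((d-1)*t+s+3) < Fintype.card V) :
    False := by
  classical
  have hβ : Nonempty β := by
    rw [← Fintype.card_pos_iff]; have := c.NN; omega
  obtain ⟨b⟩ := hβ
  let Q : Finset V → Prop := fun T => (∀ v ∈ T, (nb H v).card = d) ∧ ∃ g, StG H C K T g
  have hQ0 : Q ∅ := ⟨by simp, fun _ => b, StG.empty _⟩
  obtain ⟨T, hT, hmax⟩ := exists_max_image (univ.filter Q) card ⟨_, by simpa using hQ0⟩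
  rw [mem_filter] at hT
  obtain ⟨-, hTd, g, hg⟩ := hT
  have hTt : T.card < t := by
    by_contra h; exact c.finish hg (by omega)
  have hsat : ∀ v, v ∉ T → (nb H v).card = d → d ≤ (nb H v ∩ cl H T).card + 1 := by
    intro v hvT hv
    by_contra hh
    obtain ⟨g', hg'⟩ := c.step6 h3 hg hTd hTt hv hvT (by omega)
    have : Q (insert v T) := by
      refine ⟨?_, g', hg'⟩
      intro a ha
      rcases mem_insert.1 ha with rfl | ha
      · exact hv
      · exact hTd a ha
    have := hmax _ (by simpa using this)
    rw [card_insert_of_notMem hvT] at this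
    omega
  obtain ⟨r, rfl⟩ := Nat.exists_eq_add_of_le hd3
  set P := cl H T \ T with hP
  set U := (cl H T)ᶜ with hU
  have hPc : P.card ≤ (3 + r) * T.card := cl_sdiff_card hTd
  have hn : Fintype.card V = T.card + P.card + U.card := by
    have h1 : P.card + T.card = (cl H T).card := card_sdiff_add_card_eq_card subset_cl
    have h2 : (cl H T).card + U.card = Fintype.card V := card_add_card_compl _
    omega
  have hUw : (r+2) * U.card ≤ ∑ u ∈ U, (P.filter (H.Adj u)).card + (r+2) * sS H (3+r) U := by
    unfold sS
    rw [mul_comm, ← smul_eq_mul, ← sum_const, mul_sum, ← sum_add_distrib]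
    refine sum_le_sum fun u hu => ?_
    have huc : u ∉ cl H T := mem_compl.1 hu
    have huT : u ∉ T := fun h => huc (subset_cl h)
    by_cases hud : (nb H u).card = 3 + r
    · have h1 := hsat u huT hud
      have h2 : nb H u ∩ cl H T ⊆ P.filter (H.Adj u) := by
        intro w hw
        rw [mem_inter, mem_nb] at hw
        rw [mem_filter, hP, mem_sdiff]
        exact ⟨⟨hw.2, fun h => huc (mem_cl.2 (Or.inr ⟨w, h, hw.1.symm⟩))⟩, hw.1⟩
      have := card_le_card h2
      omega
    · have h1 := c.dmin u
      have : (r+2) * 1 ≤ (r+2) * ((nb H u).card - (3 + r)) := Nat.mul_le_mul_left _ (by omega)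
      omega
  have hPw : ∑ p ∈ P, (U.filter (H.Adj p)).card ≤ P.card + (r+2) * sS H (3+r) P := by
    unfold sS
    rw [card_eq_sum_ones, mul_sum, ← sum_add_distrib]
    refine sum_le_sum fun p hp => ?_
    rw [hP, mem_sdiff] at hp
    have hsplit : (nb H p ∩ cl H T).card + (U.filter (H.Adj p)).card = (nb H p).card := by
      rw [← card_union_of_disjoint]
      · congr 1; ext w
        simp only [mem_union, mem_inter, mem_filter, mem_nb, hU, mem_compl]; tauto
      · rw [disjoint_left]; intro w hw hw'
        simp only [mem_inter, mem_filter, mem_nb, hU, mem_compl] at hw hw'; tauto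
    by_cases hpd : (nb H p).card = 3 + r
    · have h1 := hsat p hp.2 hpd
      omega
    · have h1 := c.dmin p
      have h2 : 0 < (nb H p ∩ cl H T).card := by
        rcases mem_cl.1 hp.1 with h | ⟨v, hv, hvp⟩
        · exact absurd h hp.2
        · exact card_pos.2 ⟨v, mem_inter.2 ⟨mem_nb.2 hvp.symm, subset_cl hv⟩⟩
      obtain ⟨x, hx⟩ := Nat.exists_eq_add_of_le h1
      rw [hx, Nat.add_sub_cancel_left]
      have hx1 : 1 ≤ x := by omega
      have : (r+1) * 1 ≤ (r+1) * x := Nat.mul_le_mul_left _ hx1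
      have h5 : (r+2)*x = (r+1)*x + x := by ring
      omega
  rw [dc] at hUw
  have hss : sS H (3+r) P + sS H (3+r) U ≤ s := by
    have hdis : Disjoint P U := by
      rw [disjoint_left]; intro w hw hw'
      rw [hP, mem_sdiff] at hw
      exact mem_compl.1 hw' hw.1
    have : sS H (3+r) (P ∪ U) = sS H (3+r) P + sS H (3+r) U := sum_union hdis
    rw [← this]; exact c.sS_le _
  have hss' := Nat.mul_le_mul_left (r+2) hss
  rw [show 3 + r - 1 = r + 2 by omega] at h3
  have e1 : (r+2) * U.card ≤ P.card + (r+2) * s := by nlinarith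
  have e2 : (r+2) * Fintype.card V ≤ (r+2) * T.card + (r+3) * P.card + (r+2) * s := by
    rw [hn]; nlinarith
  have e3 : (r+3) * P.card ≤ (r+3) * ((3+r) * T.card) := Nat.mul_le_mul_left _ hPc
  have e4 := Nat.mul_le_mul_left (r+2) h3.le
  have e5 : (r+2) * T.card + (r+3) * ((3+r) * T.card) ≤ (r+2) * t + (r+3) * ((3+r) * t) := by
    gcongr
  nlinarith [Nat.zero_le (r*t), Nat.zero_le (r*(r*t)), Nat.zero_le (r*s)]

end RK7

set_option linter.unusedSectionVars false
set_option linter.unusedVariables false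

section RK8
open Finset

variable {V β : Type} [Fintype V] [DecidableEq V] [Fintype β] [DecidableEq β]

structure Gd (H : SimpleGraph V) [DecidableRel H.Adj] (s t : ℕ) (T : Finset V) : Prop where
  low : ∀ v ∈ T, (nb H v).card = 2
  clo : ∀ u, u ∉ T → (T.filter (H.Adj u)).card ≤ 1
  Bc : (cl H T \ T).card ≤ 3 * s + 2
  Tc : T.card ≤ t + 1

variable {H : SimpleGraph V} [DecidableRel H.Adj] {C : SimpleGraph β} [DecidableRel C.Adj]
variable {K : Finset β} {d s t : ℕ}

lemma e2_even (T : Finset V) : Even (e2 H T) := by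
  induction T using Finset.induction_on with
  | empty => simp [e2]
  | insert v T hv ih => rw [e2_insert hv]; exact ih.add (even_two_mul _)

lemma greedy_sdr [Nonempty β] (S : Finset V) (A : V → Finset β) (hA : ∀ u ∈ S, S.card ≤ (A u).card) :
    ∃ h : V → β, Set.InjOn h S ∧ ∀ u ∈ S, h u ∈ A u := by
  induction S using Finset.induction_on with
  | empty => exact ⟨fun _ => Classical.arbitrary β, by simp, by simp⟩
  | insert v S hv ih =>
    rw [card_insert_of_notMem hv] at hA
    obtain ⟨h, hi, hh⟩ := ih (fun u hu => by have := hA u (mem_insert_of_mem hu); omega)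
    have h1 := hA v (mem_insert_self _ _)
    have h2 : (S.image h).card ≤ S.card := card_image_le
    have h3 : (A v).card - (S.image h).card ≤ (A v \ S.image h).card := le_card_sdiff _ _
    obtain ⟨y, hy⟩ := card_pos.1 (show 0 < (A v \ S.image h).card by omega)
    rw [mem_sdiff] at hy
    have hne : ∀ a ∈ S, a ≠ v := fun a ha h => hv (h ▸ ha)
    have hy' : ∀ a ∈ S, h a ≠ y := fun a ha hh => hy.2 (hh ▸ mem_image_of_mem h ha)
    refine ⟨Function.update h v y, ?_, ?_⟩
    · intro a ha b hb hab
      rw [mem_coe, mem_insert] at ha hb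
      rcases ha with ha | ha <;> rcases hb with hb | hb
      · rw [ha, hb]
      · rw [ha, Function.update_self, Function.update_of_ne (hne b hb)] at hab
        exact absurd hab.symm (hy' b hb)
      · rw [hb, Function.update_self, Function.update_of_ne (hne a ha)] at hab
        exact absurd hab (hy' a ha)
      · rw [Function.update_of_ne (hne a ha), Function.update_of_ne (hne b hb)] at hab
        exact hi ha hb hab
    · intro u hu
      rcases mem_insert.1 hu with rfl | hu
      · rw [Function.update_self]; exact hy.1
      · rw [Function.update_of_ne (hne u hu)]; exact hh u hu

lemma mem_B {T : Finset V} {u : V} : u ∈ cl H T \ T ↔ u ∉ T ∧ ∃ v ∈ T, H.Adj v u := by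
  rw [mem_sdiff, mem_cl]; tauto

/-- embedding a closed set -/
lemma Cx.close_fin (c : Cx H C K 2 s t) (h3 : 3 * (t + s + 3) < Fintype.card V) {T : Finset V}
    (hT : Gd H s t T) (hTt : t ≤ T.card) : False := by
  have hkey := c.key; have hht := c.ht; have ht1 := c.t1; have hN := c.NN
  have hβ : Nonempty β := by
    rw [← Fintype.card_pos_iff]; omega
  set B := cl H T \ T with hB
  have hBc : B.card ≤ 2 * T.card := cl_sdiff_card hT.low
  have hBc2 : B.card ≤ 3 * s + 2 := hT.Bc
  have hTc := hT.Tc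
  have hBK : 2 * B.card ≤ K.card := by omega
  set L := univ.filter (fun y => K.card < 2 * (K ∩ nb C y).card) with hL
  have hLi : Indep C L := by
    intro y hy z hz hyz
    rw [hL, mem_filter] at hy hz
    have hd : Disjoint (K ∩ nb C y) (K ∩ nb C z) := by
      rw [disjoint_left]; intro x hx hx'
      rw [mem_inter, mem_nb] at hx hx'
      exact c.c.tf x y z hx.2.symm hyz hx'.2.symm
    have h1 := card_union_of_disjoint hd
    have h2 : ((K ∩ nb C y) ∪ (K ∩ nb C z)).card ≤ K.card :=
      card_le_card (union_subset inter_subset_left inter_subset_left)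
    omega
  have hLc := c.Kmax L hLi
  set Y := (K ∪ L)ᶜ with hY
  have hYc : 2 * t + s + 1 ≤ Y.card := by
    have h1 := card_union_le K L
    have h2 : (K ∪ L).card + Y.card = Fintype.card β := card_add_card_compl _
    omega
  have hcross : e2 H T + 1 ≤ 2 * T.card := by
    have h1 : ∑ v ∈ T, (nb H v).card = 2 * T.card := by
      rw [sum_congr rfl hT.low, sum_const, smul_eq_mul, mul_comm]
    rw [← h1]
    unfold e2
    apply Nat.succ_le_of_lt
    have hsub : ∀ v, T.filter (H.Adj v) ⊆ nb H v := fun v w hw => mem_nb.2 (mem_filter.1 hw).2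
    apply sum_lt_sum (fun v _ => card_le_card (hsub v))
    obtain ⟨a, ha, b, hb, hab⟩ := c.conn T (card_pos.1 (by omega)) (fun h => by
      rw [h, card_univ] at hTc; omega)
    refine ⟨a, ha, card_lt_card ⟨hsub a, fun h => ?_⟩⟩
    exact hb (mem_filter.1 (h (mem_nb.2 hab))).1
  obtain ⟨k, hk⟩ := e2_even (H := H) T
  obtain ⟨g, hgY, hg⟩ := c.c.ih T (fun h => by rw [h, card_univ] at hTc; omega) Y (by omega) (by omega)
  obtain ⟨h, hi, hh⟩ := greedy_sdr B (fun u => K.filter (fun y => ∀ a ∈ T, H.Adj a u → ¬ C.Adj (g a) y)) (by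
    intro u hu
    obtain ⟨huT, x, hx, hxu⟩ := mem_B.1 hu
    have h1 : K \ nb C (g x) ⊆ K.filter (fun y => ∀ a ∈ T, H.Adj a u → ¬ C.Adj (g a) y) := by
      intro y hy
      rw [mem_sdiff, mem_nb] at hy
      rw [mem_filter]
      refine ⟨hy.1, fun a ha hau => ?_⟩
      have : a = x := card_le_one.1 (hT.clo u huT) a (mem_filter.2 ⟨ha, hau.symm⟩) x
        (mem_filter.2 ⟨hx, hxu.symm⟩)
      rw [this]; exact hy.2
    refine le_trans ?_ (card_le_card h1)
    have h2 : (K \ nb C (g x)).card + (K ∩ nb C (g x)).card = K.card := card_sdiff_add_card_inter _ _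
    have h4 := hgY x hx
    rw [hY, mem_compl, mem_union, hL, mem_filter] at h4
    push Not at h4
    have := h4.2 (mem_univ _)
    omega)
  have hhK : ∀ u ∈ B, h u ∈ K := fun u hu => (mem_filter.1 (hh u hu)).1
  have hgK : ∀ a ∈ T, g a ∉ K := by
    intro a ha h
    have h4 := hgY a ha
    rw [hY, mem_compl, mem_union] at h4
    tauto
  have e2' : Emb H C B h := ⟨hi, fun a ha b hb _ => c.Ki _ (hhK a ha) _ (hhK b hb)⟩
  have e3 := glue hg e2' (fun a ha b hb hab => hgK a ha (hab ▸ hhK b hb))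
    (fun a ha b hb _ hab => (mem_filter.1 (hh b hb)).2 a ha hab)
  have hu : T ∪ B = cl H T := by rw [hB]; exact union_sdiff_of_subset subset_cl
  rw [hu] at e3
  refine c.finish (T := T) (g := fun a => if a ∈ T then g a else h a) ⟨e3, ?_, ?_⟩ hTt
  · intro a ha; simp only [ha, if_true]; exact hgK a ha
  · intro a ha haT; simp only [haT, if_false]; exact hhK a (mem_sdiff.2 ⟨ha, haT⟩)

lemma add1_clo {T : Finset V} (hclo : ∀ u, u ∉ T → (T.filter (H.Adj u)).card ≤ 1) {v : V}
    (hv : ∀ u, H.Adj v u → u ∉ T → T.filter (H.Adj u) = ∅) :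
    ∀ u, u ∉ insert v T → ((insert v T).filter (H.Adj u)).card ≤ 1 := by
  intro u hu
  rw [mem_insert] at hu
  push Not at hu
  rw [filter_insert]
  by_cases huv : H.Adj u v
  · rw [if_pos huv, hv u huv.symm hu.2]; simp
  · rw [if_neg huv]; exact hclo u hu.2

lemma add1_B {T : Finset V} {v : V} :
    cl H (insert v T) \ insert v T ⊆ (cl H T \ T).erase v ∪ (nb H v \ T) := by
  intro u hu
  rw [cl_insert] at hu
  simp only [mem_sdiff, mem_insert, mem_union, mem_erase] at hu ⊢
  tauto

lemma Cx.case_two (c : Cx H C K 2 s t) (h3 : 3 * (t + s + 3) < Fintype.card V) : False := by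
  classical
  have h0 : Gd H s t ∅ := ⟨by simp, by simp, by simp [cl, NT], by simp⟩
  obtain ⟨T, hT, hmax⟩ := exists_max_image (univ.filter (Gd H s t)) card ⟨_, by simpa using h0⟩
  rw [mem_filter] at hT
  replace hT := hT.2
  have hmax' : ∀ T', Gd H s t T' → T'.card ≤ T.card := fun T' h => hmax T' (by simpa using h)
  by_cases hTt : t ≤ T.card
  · exact c.close_fin h3 hT hTt
  push Not at hTt
  set B := cl H T \ T with hB
  set BM := B.filter (fun u => (nb H u).card ≠ 2) with hBM
  have ins_low : ∀ v, (nb H v).card = 2 → ∀ a ∈ insert v T, (nb H a).card = 2 := by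
    intro v hv a ha
    rcases mem_insert.1 ha with rfl | ha
    · exact hv
    · exact hT.low a ha
  -- each low vertex of B is adjacent to a hub in B
  have key1 : ∀ v ∈ B, (nb H v).card = 2 → ∃ x ∈ T, ∃ u ∈ BM, nb H v = {x, u} := by
    intro v hvB hv
    obtain ⟨hvT, x, hx, hxv⟩ := mem_B.1 hvB
    obtain ⟨p, q, hpq, hnb⟩ := card_eq_two.1 hv
    have hex : ∃ u, u ≠ x ∧ nb H v = {x, u} := by
      have : x ∈ nb H v := mem_nb.2 hxv.symm
      rw [hnb, mem_insert, mem_singleton] at this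
      rcases this with rfl | rfl
      · exact ⟨q, hpq.symm, hnb⟩
      · exact ⟨p, hpq, by rw [hnb, pair_comm]⟩
    obtain ⟨u, hux, hnb⟩ := hex
    have hvu : H.Adj v u := by rw [← mem_nb, hnb]; simp
    have hadj : ∀ w, H.Adj v w → w = x ∨ w = u := by
      intro w hw; rw [← mem_nb, hnb] at hw; simpa using hw
    have huT : u ∉ T := by
      intro huT
      have := card_le_one.1 (hT.clo v hvT) u (mem_filter.2 ⟨huT, hvu⟩) x
        (mem_filter.2 ⟨hx, hxv.symm⟩)
      exact hux this
    by_cases hu0 : T.filter (H.Adj u) = ∅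
    · exfalso
      have := hmax' (insert v T) ⟨ins_low v hv, add1_clo hT.clo ?_, ?_, ?_⟩
      · rw [card_insert_of_notMem hvT] at this; omega
      · intro w hw hwT
        rcases hadj w hw with rfl | rfl
        · exact absurd hx hwT
        · exact hu0
      · have h1 := card_le_card (add1_B (H := H) (T := T) (v := v))
        have h2 := card_union_le ((cl H T \ T).erase v) (nb H v \ T)
        have h4 : (nb H v \ T).card ≤ 1 := by
          have : nb H v \ T ⊆ {u} := by
            intro w hw
            rw [mem_sdiff, mem_nb] at hw
            rcases hadj w hw.1 with rfl | rfl
            · exact absurd hx hw.2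
            · simp
          simpa using card_le_card this
        have h5 : ((cl H T \ T).erase v).card = (cl H T \ T).card - 1 := card_erase_of_mem hvB
        have h6 : 0 < (cl H T \ T).card := card_pos.2 ⟨v, hvB⟩
        have := hT.Bc
        omega
      · rw [card_insert_of_notMem hvT]; omega
    · obtain ⟨z, hz⟩ := nonempty_iff_ne_empty.2 hu0
      rw [mem_filter] at hz
      have huB : u ∈ B := mem_B.2 ⟨huT, z, hz.1, hz.2.symm⟩
      by_cases hu2 : (nb H u).card = 2
      · exfalso
        have hadju : ∀ w, H.Adj u w → w = z ∨ w = v := by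
          intro w hw
          by_contra hh
          push Not at hh
          have hzv : z ≠ v := fun h => hvT (h ▸ hz.1)
          have h1 : ({w, z, v} : Finset V) ⊆ nb H u := by
            intro a ha
            simp only [mem_insert, mem_singleton] at ha
            rcases ha with rfl | rfl | rfl
            · exact mem_nb.2 hw
            · exact mem_nb.2 hz.2
            · exact mem_nb.2 hvu.symm
          have h2 := card_le_card h1
          rw [card_insert_of_notMem (by simp [hh.1, hh.2]), card_pair hzv] at h2
          omega
        have huv : u ∉ insert v T := by
          rw [mem_insert]; push Not; exact ⟨hvu.ne.symm, huT⟩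
        have hTcc : (insert u (insert v T)).card = T.card + 2 := by
          rw [card_insert_of_notMem huv, card_insert_of_notMem hvT]
        have := hmax' (insert u (insert v T)) ⟨?_, ?_, ?_, ?_⟩
        · omega
        · intro a ha
          rcases mem_insert.1 ha with rfl | ha
          · exact hu2
          · exact ins_low v hv a ha
        · intro w hw
          simp only [mem_insert] at hw
          push Not at hw
          rw [filter_insert, if_neg, filter_insert, if_neg]
          · exact hT.clo w hw.2.2
          · intro h
            rcases hadj w h.symm with rfl | rfl
            · exact hw.2.2 hx
            · exact hw.1 rfl
          · intro h
            rcases hadju w h.symm with rfl | rfl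
            · exact hw.2.2 hz.1
            · exact hw.2.1 rfl
        · refine le_trans (card_le_card ?_) hT.Bc
          intro w hw
          rw [mem_B] at hw ⊢
          obtain ⟨hw, a, ha, haw⟩ := hw
          simp only [mem_insert] at hw ha
          push Not at hw
          refine ⟨hw.2.2, ?_⟩
          rcases ha with rfl | rfl | ha
          · rcases hadju w haw with rfl | rfl
            · exact absurd hz.1 hw.2.2
            · exact absurd rfl hw.2.1
          · rcases hadj w haw with rfl | rfl
            · exact absurd hx hw.2.2
            · exact absurd rfl hw.1
          · exact ⟨a, ha, haw⟩
        · omega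
      · exact ⟨x, hx, u, mem_filter.2 ⟨huB, hu2⟩, hnb⟩
  -- counting around hubs of B
  have hBMsub : BM ⊆ Hub H 2 := fun u hu => mem_Hub.2 (mem_filter.1 hu).2
  set R := BM.biUnion (fun u => nb H u \ T) with hR
  have hRc : R.card ≤ BM.card + sS H 2 BM := by
    refine card_biUnion_le.trans ?_
    unfold sS
    rw [card_eq_sum_ones, ← sum_add_distrib]
    refine sum_le_sum fun u hu => ?_
    obtain ⟨huT, x, hx, hxu⟩ := mem_B.1 (mem_filter.1 hu).1
    have h1 : (nb H u \ T).card < (nb H u).card := by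
      apply card_lt_card
      refine ⟨sdiff_subset, fun h => ?_⟩
      exact (mem_sdiff.1 (h (mem_nb.2 hxu.symm))).2 hx
    have := c.dmin u
    omega
  have hms : (Hub H 2).card ≤ s := (hub_le c.dmin (Subset.refl _)).trans (c.sS_le _)
  have hBMm := card_le_card hBMsub
  have hsB := c.sS_le BM
  have hBc : B.card ≤ 3 * s := by
    have hsub : B ⊆ BM ∪ R := by
      intro v hv
      rw [mem_union]
      by_cases hv2 : (nb H v).card = 2
      · right
        obtain ⟨x, hx, u, hu, hnb⟩ := key1 v hv hv2
        rw [hR, mem_biUnion]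
        refine ⟨u, hu, mem_sdiff.2 ⟨?_, (mem_B.1 hv).1⟩⟩
        rw [mem_nb, H.adj_comm, ← mem_nb, hnb]; simp
      · left; exact mem_filter.2 ⟨hv, hv2⟩
    have := (card_le_card hsub).trans (card_union_le _ _)
    omega
  have hcover : (univ : Finset V) ⊆ (T ∪ Hub H 2) ∪ R := by
    intro v _
    rw [mem_union, mem_union]
    by_contra hh
    push Not at hh
    obtain ⟨⟨hvT, hvM⟩, hvR⟩ := hh
    rw [mem_Hub, not_not] at hvM
    have hvB : v ∉ B := by
      intro hvB
      obtain ⟨x, hx, u, hu, hnb⟩ := key1 v hvB hvM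
      apply hvR
      rw [hR, mem_biUnion]
      refine ⟨u, hu, mem_sdiff.2 ⟨?_, hvT⟩⟩
      rw [mem_nb, H.adj_comm, ← mem_nb, hnb]; simp
    have := hmax' (insert v T) ⟨ins_low v hvM, add1_clo hT.clo ?_, ?_, ?_⟩
    · rw [card_insert_of_notMem hvT] at this; omega
    · intro u hvu huT
      by_contra hne
      obtain ⟨z, hz⟩ := nonempty_iff_ne_empty.2 hne
      rw [mem_filter] at hz
      have huB : u ∈ B := mem_B.2 ⟨huT, z, hz.1, hz.2.symm⟩
      by_cases hu2 : (nb H u).card = 2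
      · obtain ⟨x, hx, w, hw, hnb⟩ := key1 u huB hu2
        have : v ∈ nb H u := mem_nb.2 hvu.symm
        rw [hnb, mem_insert, mem_singleton] at this
        rcases this with rfl | rfl
        · exact hvT hx
        · exact (mem_filter.1 hw).2 hvM
      · apply hvR
        rw [hR, mem_biUnion]
        exact ⟨u, mem_filter.2 ⟨huB, hu2⟩, mem_sdiff.2 ⟨mem_nb.2 hvu.symm, hvT⟩⟩
    · have h1 := card_le_card (add1_B (H := H) (T := T) (v := v))
      have h2 := card_union_le ((cl H T \ T).erase v) (nb H v \ T)
      have h4 : (nb H v \ T).card ≤ 2 := hvM ▸ card_le_card sdiff_subset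
      have h5 : ((cl H T \ T).erase v).card ≤ (cl H T \ T).card := card_le_card (erase_subset _ _)
      have h6 : (cl H T \ T).card ≤ 3 * s := hBc
      omega
    · rw [card_insert_of_notMem hvT]; omega
  have h1 := (card_le_card hcover).trans (card_union_le _ _)
  have h2 := card_union_le T (Hub H 2)
  rw [card_univ] at h1
  omega

end RK8

set_option linter.unusedSectionVars false
set_option linter.unusedVariables false

section RK9
open Finset

lemma Ctx.false {V β : Type} [Fintype V] [DecidableEq V] [Fintype β] [DecidableEq β]
    {H : SimpleGraph V} [DecidableRel H.Adj] {C : SimpleGraph β} [DecidableRel C.Adj]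
    (c0 : Ctx H C) : False := by
  obtain ⟨K, d, s, t, c⟩ := c0.toCx
  by_cases hadj : ∃ v w, H.Adj v w ∧ (nb H v).card = d ∧ (nb H w).card = d
  · obtain ⟨v, w, hvw, hv, hw⟩ := hadj
    rcases Nat.lt_or_ge (3 * ((d-1)*t+s+3)) (Fintype.card V) with h3 | h3
    · rcases Nat.lt_or_ge 2 d with hd | hd
      · exact c.case_big hd h3
      · have hd2 : d = 2 := le_antisymm hd c.d2
        subst hd2
        exact c.case_two (by simpa using h3)
    · exact c.case_adj hvw hv hw h3
  · push Not at hadj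
    exact c.case_indep (fun v w h hv => hadj v w h hv)

lemma e2_comap {V : Type} [Fintype V] [DecidableEq V] (H : SimpleGraph V) [DecidableRel H.Adj]
    (T : Finset V) [DecidableRel (H.comap (fun x : {x // x ∈ T} => (x : V))).Adj] :
    e2 (H.comap (fun x : {x // x ∈ T} => (x : V))) univ = e2 H T := by
  unfold e2
  rw [← sum_coe_sort T]
  refine sum_congr rfl fun v _ => ?_
  rw [← card_map (Function.Embedding.subtype _)]
  congr 1
  ext w
  simp only [mem_map, mem_filter, mem_univ, true_and, SimpleGraph.comap_adj,
    Function.Embedding.coe_subtype, Subtype.exists, exists_and_right, exists_eq_right]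
  exact ⟨fun ⟨a, b⟩ => ⟨a, b⟩, fun ⟨a, b⟩ => ⟨a, b⟩⟩

lemma embed_main (n : ℕ) : ∀ (V β : Type) [Fintype V] [DecidableEq V] [Fintype β] [DecidableEq β]
    (H : SimpleGraph V) [DecidableRel H.Adj] (C : SimpleGraph β) [DecidableRel C.Adj],
    Fintype.card V = n → (∀ a b c, C.Adj a b → C.Adj b c → ¬ C.Adj a c) →
    Fintype.card V ≤ Fintype.card β → e2 H univ + 1 ≤ Fintype.card β →
    ∃ g, Emb H C univ g := by
  induction n using Nat.strong_induction_on with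
  | _ n ih =>
    intro V β _ _ _ _ H _ C _ hn htf hN hq
    by_contra hno
    refine Ctx.false (H := H) (C := C) ⟨htf, ?_, hno, hN, hq⟩
    intro T hT Y hTY heY
    have hlt : T.card < n := by
      rw [← hn]; exact card_lt_univ_of_notMem (x := Classical.choose (not_forall.1
        (fun h => hT (eq_univ_iff_forall.2 h)))) (Classical.choose_spec (not_forall.1
        (fun h => hT (eq_univ_iff_forall.2 h))))
    obtain ⟨y0, hy0⟩ := card_pos.1 (show 0 < Y.card by omega)
    classical
    obtain ⟨g, hg1, hg2⟩ := ih T.card hlt {x // x ∈ T} {y // y ∈ Y}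
      (H.comap (fun x : {x // x ∈ T} => (x : V))) (C.comap (fun x : {x // x ∈ Y} => (x : β)))
      (by simp) (fun a b c h1 h2 h3 => htf _ _ _ h1 h2 h3) (by simpa using hTY)
      (by rw [e2_comap]; simpa using heY)
    refine ⟨fun a => if ha : a ∈ T then (g ⟨a, ha⟩ : β) else y0, ?_, ?_, ?_⟩
    · intro a ha; simp only [ha, dif_pos]; exact (g _).2
    · intro a ha b hb hab
      have ha : a ∈ T := ha
      have hb : b ∈ T := hb
      simp only [ha, hb, dif_pos] at hab
      have := hg1 (by simp) (by simp) (Subtype.ext hab)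
      simpa using this
    · intro a ha b hb hab
      simp only [ha, hb, dif_pos]
      exact hg2 ⟨a, ha⟩ (mem_univ _) ⟨b, hb⟩ (mem_univ _) hab

end RK9

theorem stmt_11 (V : Type) [Fintype V] [DecidableEq V] (H : SimpleGraph V)
    [DecidableRel H.Adj] (h : ∀ v : V, 0 < H.degree v) :
    ramseyNumber (⊤ : SimpleGraph (Fin 3)) H ≤ 2 * H.edgeFinset.card + 1 := by
  classical
  have hsum := H.sum_degrees_eq_twice_card_edges
  have he : e2 H Finset.univ = 2 * H.edgeFinset.card := by
    rw [← hsum, e2_univ]; exact Finset.sum_congr rfl (fun u _ => nb_eq_degree u)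
  have hn : Fintype.card V ≤ 2 * H.edgeFinset.card := by
    rw [← hsum, ← Finset.card_univ, Finset.card_eq_sum_ones]
    exact Finset.sum_le_sum (fun v _ => h v)
  apply Nat.sInf_le
  intro C
  by_cases htf : ∀ a b c, C.Adj a b → C.Adj b c → ¬ C.Adj a c
  · right
    obtain ⟨g, hg1, hg2⟩ := embed_main _ V (Fin (2 * H.edgeFinset.card + 1)) H C rfl htf
      (by rw [Fintype.card_fin]; omega) (by rw [Fintype.card_fin, he])
    have hinj : Function.Injective g := fun a b hab => hg1 (by simp) (by simp) hab
    refine ⟨⟨g, ?_⟩, hinj⟩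
    intro a b hab
    rw [SimpleGraph.compl_adj]
    exact ⟨fun hh => hab.ne (hinj hh), hg2 a (Finset.mem_univ _) b (Finset.mem_univ _) hab⟩
  · left
    push Not at htf
    obtain ⟨a, b, c, hab, hbc, hac⟩ := htf
    have hne := hab.ne
    have hne2 := hbc.ne
    have hne3 := hac.ne
    have hadj : ∀ i j : Fin 3, i ≠ j → C.Adj (![a, b, c] i) (![a, b, c] j) := by
      intro i j hij
      fin_cases i <;> fin_cases j <;> simp_all [C.adj_comm]
    refine ⟨⟨![a, b, c], ?_⟩, ?_⟩
    · intro i j hij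
      exact hadj i j ((SimpleGraph.top_adj _ _).1 hij)
    · intro i j hij
      by_contra hh
      exact (hadj i j hh).ne hij
end

section
/- For every integer n ≥ 2 and every odd integer k ≥ 3, R(C_k, K_n) ≤ 3k · n^{(k+1)/(k−1)}. -/
open SimpleGraph in
lemma hasCopy_of_fun {V : Type*} (C : SimpleGraph V) (k : ℕ) (hk : 3 ≤ k) (f : ℕ → V)
    (hinj : ∀ s t, s < t → t < k → f s ≠ f t)
    (hadj : ∀ t, t + 1 < k → C.Adj (f t) (f (t+1))) (hlast : C.Adj (f (k-1)) (f 0)) :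
    HasCopy (SimpleGraph.cycleGraph k) C := by
  have key : ∀ u v : Fin k, (v - u).val = 1 → C.Adj (f u) (f v) := by
    intro u v h
    rw [Fin.sub_def] at h
    simp only at h
    have hu := u.2
    have hv := v.2
    by_cases hlt : u.val ≤ v.val
    · have e : k - u.val + v.val = (v.val - u.val) + k := by omega
      rw [e, Nat.add_mod_right, Nat.mod_eq_of_lt (by omega)] at h
      have : v.val = u.val + 1 := by omega
      rw [this]
      exact hadj _ (by omega)
    · rw [Nat.mod_eq_of_lt (by omega)] at h
      have h1 : u.val = k - 1 := by omega
      have h2 : v.val = 0 := by omega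
      rw [h1, h2]; exact hlast
  refine ⟨⟨fun u => f u.val, ?_⟩, ?_⟩
  · intro u v h
    rw [SimpleGraph.cycleGraph_adj'] at h
    rcases h with h | h
    · exact (key _ _ h).symm
    · exact key _ _ h
  · intro u v h
    by_contra hne
    have hne' : u.val ≠ v.val := fun h => hne (Fin.ext h)
    rcases lt_or_gt_of_ne hne' with h1 | h1
    · exact hinj _ _ h1 v.2 h
    · exact hinj _ _ h1 u.2 h.symm

lemma mono_path {V : Type*} [DecidableEq V] (G : SimpleGraph V) (key : V → ℕ) (T : ℕ) :
    ∀ L : Finset V, (∀ u ∈ L, ∀ v ∈ L, key u = key v → u = v) →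
    (∃ x : ℕ → V, (∀ t ≤ T, x t ∈ L) ∧ ∀ t < T, G.Adj (x t) (x (t+1)) ∧ key (x t) < key (x (t+1)))
    ∨ ∃ I ⊆ L, (∀ u ∈ I, ∀ v ∈ I, ¬ G.Adj u v) ∧ L.card ≤ T * I.card := by
  classical
  induction T with
  | zero =>
    intro L _
    rcases L.eq_empty_or_nonempty with h | ⟨a, ha⟩
    · right
      exact ⟨∅, by simp, by simp, by simp [h]⟩
    · left
      exact ⟨fun _ => a, fun _ _ => ha, fun t ht => absurd ht (by omega)⟩
  | succ T ih =>
    intro L hL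
    set L' := L.filter (fun v => ∃ u ∈ L, G.Adj u v ∧ key u < key v) with hL'
    set A := L.filter (fun v => ¬ ∃ u ∈ L, G.Adj u v ∧ key u < key v) with hA
    have hcard : L'.card + A.card = L.card := Finset.card_filter_add_card_filter_not _
    have hAind : ∀ u ∈ A, ∀ v ∈ A, ¬ G.Adj u v := by
      intro u hu v hv huv
      rw [hA, Finset.mem_filter] at hu hv
      rcases lt_trichotomy (key u) (key v) with h | h | h
      · exact hv.2 ⟨u, hu.1, huv, h⟩
      · exact huv.ne (hL _ hu.1 _ hv.1 h)
      · exact hu.2 ⟨v, hv.1, huv.symm, h⟩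
    rcases ih L' (fun u hu v hv => hL u (Finset.mem_filter.1 hu).1 v (Finset.mem_filter.1 hv).1) with
      ⟨x, hx, hx2⟩ | ⟨I, hI, hI2, hI3⟩
    · left
      obtain ⟨_, u, hu, hu1, hu2⟩ := Finset.mem_filter.1 (hx 0 (Nat.zero_le _))
      refine ⟨fun t => Nat.casesOn t u x, ?_, ?_⟩
      · rintro (_ | t) ht
        · exact hu
        · exact (Finset.mem_filter.1 (hx t (by omega))).1
      · rintro (_ | t) ht
        · exact ⟨hu1, hu2⟩
        · exact hx2 t (by omega)
    · right
      by_cases h : I.card ≤ A.card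
      · refine ⟨A, Finset.filter_subset _ _, hAind, ?_⟩
        nlinarith
      · refine ⟨I, hI.trans (Finset.filter_subset _ _), hI2, ?_⟩
        nlinarith

def tkey {N : ℕ} (p : Fin N → Fin N) : ℕ → Fin N → ℕ
  | 0, _ => 0
  | i+1, v => tkey p i (p v) * N + v.val

lemma tkey_div {N : ℕ} (p : Fin N → Fin N) (s i : ℕ) (v : Fin N) :
    tkey p (i+s) v / N ^ s = tkey p i (p^[s] v) := by
  induction s generalizing v with
  | zero => simp
  | succ s ih =>
    have hN : 0 < N := v.pos
    rw [Function.iterate_succ_apply, ← ih, pow_succ', ← Nat.div_div_eq_div_mul, ← add_assoc]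
    congr 1
    show (tkey p (i+s) (p v) * N + v.val) / N = _
    rw [mul_comm, Nat.mul_add_div hN, Nat.div_eq_of_lt v.2, add_zero]

lemma cycle_of_path {N : ℕ} (G : SimpleGraph (Fin N)) (L : ℕ → Finset (Fin N)) (r : Fin N)
    (p : Fin N → Fin N) (h0 : L 0 = {r})
    (hdisj : ∀ i j v, v ∈ L i → v ∈ L j → i = j)
    (hp : ∀ i, ∀ v ∈ L (i+1), p v ∈ L i ∧ G.Adj (p v) v) (m i : ℕ) (him : i ≤ m)
    (hi : 1 ≤ i)
    (x : ℕ → Fin N) (hx : ∀ t ≤ 2 * m - 1, x t ∈ L i)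
    (hx2 : ∀ t < 2 * m - 1, G.Adj (x t) (x (t+1)) ∧ tkey p i (x t) < tkey p i (x (t+1))) :
    HasCopy (SimpleGraph.cycleGraph (2 * m + 1)) G := by
  have hinj : ∀ i, ∀ u ∈ L i, ∀ v ∈ L i, tkey p i u = tkey p i v → u = v := by
    rintro (_ | i) u hu v hv h
    · rw [h0, Finset.mem_singleton] at hu hv
      rw [hu, hv]
    · have h' : (tkey p i (p u) * N + u.val) % N = (tkey p i (p v) * N + v.val) % N := by
        have : tkey p i (p u) * N + u.val = tkey p i (p v) * N + v.val := h
        rw [this]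
      rw [Nat.mul_add_mod_self_right, Nat.mul_add_mod_self_right, Nat.mod_eq_of_lt u.2,
        Nat.mod_eq_of_lt v.2] at h'
      exact Fin.ext h'
  have hit : ∀ s, ∀ i, ∀ v ∈ L (i+s), p^[s] v ∈ L i := by
    intro s
    induction s with
    | zero => intro i v hv; simpa using hv
    | succ s ih =>
      intro i v hv
      rw [Function.iterate_succ_apply]
      exact ih i _ (hp (i+s) v hv).1
  have hit' : ∀ s ≤ i, ∀ v ∈ L i, p^[s] v ∈ L (i - s) := by
    intro s hs v hv
    apply hit s
    rwa [Nat.sub_add_cancel hs]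
  have hadjit : ∀ s < i, ∀ v ∈ L i, G.Adj (p^[s+1] v) (p^[s] v) := by
    intro s hs v hv
    rw [Function.iterate_succ_apply']
    refine (hp (i - s - 1) _ ?_).2
    have := hit' s hs.le v hv
    rwa [Nat.sub_add_cancel (by omega)]
  have hdiv : ∀ s ≤ i, ∀ v, tkey p i v / N ^ s = tkey p (i - s) (p^[s] v) := by
    intro s hs v
    have := tkey_div p s (i - s) v
    rwa [Nat.sub_add_cancel hs] at this
  have heq : ∀ s ≤ i, ∀ u ∈ L i, ∀ v ∈ L i, tkey p i u / N ^ s = tkey p i v / N ^ s →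
      p^[s] u = p^[s] v := by
    intro s hs u hu v hv h
    rw [hdiv s hs, hdiv s hs] at h
    exact hinj _ _ (hit' s hs u hu) _ (hit' s hs v hv) h
  have hmono : ∀ a b, a < b → b ≤ 2 * m - 1 → tkey p i (x a) < tkey p i (x b) := by
    intro a b hab
    induction b, hab using Nat.le_induction with
    | base => intro hb; exact (hx2 a (by omega)).2
    | succ b hb ih => intro hb'; exact (ih (by omega)).trans (hx2 b (by omega)).2
  have hmono' : ∀ a b, a ≤ b → b ≤ 2 * m - 1 → tkey p i (x a) ≤ tkey p i (x b) := by
    intro a b hab hb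
    rcases hab.eq_or_lt with h | h
    · rw [h]
    · exact (hmono a b h hb).le
  have hex : ∃ s, tkey p i (x 0) / N ^ s = tkey p i (x (2*m-1)) / N ^ s := by
    refine ⟨i, ?_⟩
    rw [hdiv i le_rfl, hdiv i le_rfl, Nat.sub_self]; rfl
  obtain ⟨j, hj, hjmin⟩ : ∃ j, tkey p i (x 0) / N ^ j = tkey p i (x (2*m-1)) / N ^ j ∧
      ∀ s < j, tkey p i (x 0) / N ^ s ≠ tkey p i (x (2*m-1)) / N ^ s := by
    classical
    exact ⟨Nat.find hex, Nat.find_spec hex, fun s hs => Nat.find_min hex hs⟩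
  have hji : j ≤ i := by
    by_contra hlt
    refine hjmin i (by omega) ?_
    rw [hdiv i le_rfl, hdiv i le_rfl, Nat.sub_self]; rfl
  have hj1 : 1 ≤ j := by
    rcases Nat.eq_zero_or_pos j with h | h
    · subst h
      have := hmono 0 (2*m-1) (by omega) le_rfl
      simp at hj; omega
    · exact h
  obtain ⟨q, hq, hqne⟩ : ∃ q < 2*m-1, tkey p i (x q) / N ^ (j-1) ≠ tkey p i (x (q+1)) / N ^ (j-1) := by
    by_contra hcon
    push Not at hcon
    have : ∀ t ≤ 2*m-1, tkey p i (x 0) / N ^ (j-1) = tkey p i (x t) / N ^ (j-1) := by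
      intro t
      induction t with
      | zero => intro _; rfl
      | succ t ih => intro ht; rw [ih (by omega), hcon t (by omega)]
    exact hjmin (j-1) (by omega) (this _ le_rfl)
  obtain ⟨l, hl⟩ : ∃ l, l = 2*m+1-2*j := ⟨_, rfl⟩
  obtain ⟨a, ha⟩ : ∃ a, a = min q (2*m-1-l) := ⟨_, rfl⟩
  have ha1 : a ≤ q := by omega
  have ha2 : q + 1 ≤ a + l := by omega
  have ha3 : a + l ≤ 2*m-1 := by omega
  have hxa := hx a (by omega)
  have hxb := hx (a+l) ha3
  have hne : tkey p i (x a) / N ^ (j-1) ≠ tkey p i (x (a+l)) / N ^ (j-1) := by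
    have h1 := Nat.div_le_div_right (c := N^(j-1)) (hmono' a q ha1 (by omega))
    have h2 := Nat.div_le_div_right (c := N^(j-1)) (hmono' q (q+1) (by omega) (by omega))
    have h3 := Nat.div_le_div_right (c := N^(j-1)) (hmono' (q+1) (a+l) ha2 (by omega))
    omega
  have hpj : p^[j] (x a) = p^[j] (x (a+l)) := by
    apply heq j hji _ hxa _ hxb
    have h1 := Nat.div_le_div_right (c := N^j) (hmono' 0 a (by omega) (by omega))
    have h2 := Nat.div_le_div_right (c := N^j) (hmono' a (a+l) (by omega) (by omega))
    have h3 := Nat.div_le_div_right (c := N^j) (hmono' (a+l) (2*m-1) (by omega) (by omega))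
    omega
  have hpne : ∀ s < j, p^[s] (x a) ≠ p^[s] (x (a+l)) := by
    intro s hs h
    apply hne
    rw [hdiv _ (by omega), hdiv _ (by omega)]
    have e : j - 1 = (j-1-s) + s := by omega
    congr 1
    rw [e, Function.iterate_add_apply, Function.iterate_add_apply, h]
  clear hne hjmin hj hex hqne
  -- the cycle
  let f : ℕ → Fin N := fun t => if t ≤ l then x (a+t) else if t ≤ l + j then p^[t-l] (x (a+l))
    else p^[2*m+1-t] (x a)
  have f1 : ∀ t ≤ l, f t = x (a+t) := fun t ht => by simp only [f]; rw [if_pos ht]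
  have f2 : ∀ t, l ≤ t → t ≤ l + j → f t = p^[t-l] (x (a+l)) := fun t ht ht' => by
    rcases ht.eq_or_lt with h | h
    · rw [← h, f1 l le_rfl, Nat.sub_self]; rfl
    · simp only [f]; rw [if_neg (by omega), if_pos ht']
  have f3 : ∀ t, l + j ≤ t → t < 2*m+1 → f t = p^[2*m+1-t] (x a) := fun t ht ht' => by
    rcases ht.eq_or_lt with h | h
    · rw [← h, f2 (l+j) (by omega) le_rfl]
      have e1 : l + j - l = j := by omega
      have e2 : 2*m+1-(l+j) = j := by omega
      rw [e1, e2, hpj]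
    · simp only [f]; rw [if_neg (by omega), if_neg (by omega)]
  have lev : ∀ s t, s ≤ i → t ≤ i → ∀ u ∈ L i, ∀ v ∈ L i, p^[s] u = p^[t] v → s = t := by
    intro s t hs ht u hu v hv h
    have h1 := hit' s hs u hu
    have h2 := hit' t ht v hv
    rw [h] at h1
    have := hdisj _ _ _ h1 h2
    omega
  apply hasCopy_of_fun G (2*m+1) (by omega) f
  · intro s t hst ht h
    by_cases hs : s ≤ l
    · have hxs := hx (a+s) (by omega)
      rw [f1 s hs] at h
      by_cases ht1 : t ≤ l
      · rw [f1 t ht1] at h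
        have := hmono (a+s) (a+t) (by omega) (by omega)
        rw [h] at this; omega
      · by_cases ht2 : t ≤ l + j
        · rw [f2 t (by omega) ht2] at h
          have := lev 0 (t-l) (by omega) (by omega) _ hxs _ hxb h
          omega
        · rw [f3 t (by omega) ht] at h
          have := lev 0 (2*m+1-t) (by omega) (by omega) _ hxs _ hxa h
          omega
    · by_cases hs2 : s ≤ l + j
      · rw [f2 s (by omega) hs2] at h
        by_cases ht2 : t ≤ l + j
        · rw [f2 t (by omega) ht2] at h
          have := lev (s-l) (t-l) (by omega) (by omega) _ hxb _ hxb h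
          omega
        · rw [f3 t (by omega) ht] at h
          have := lev (s-l) (2*m+1-t) (by omega) (by omega) _ hxb _ hxa h
          rw [this] at h
          exact hpne _ (by omega) h.symm
      · rw [f3 s (by omega) (by omega), f3 t (by omega) ht] at h
        have := lev (2*m+1-s) (2*m+1-t) (by omega) (by omega) _ hxa _ hxa h
        omega
  · intro t ht
    by_cases ht1 : t + 1 ≤ l
    · rw [f1 t (by omega), f1 _ ht1]
      exact (hx2 (a+t) (by omega)).1
    · by_cases ht2 : t + 1 ≤ l + j
      · rw [f2 t (by omega) (by omega), f2 (t+1) (by omega) ht2]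
        have := hadjit (t-l) (by omega) _ hxb
        rw [show t + 1 - l = t - l + 1 by omega]
        exact this.symm
      · rw [f3 t (by omega) (by omega), f3 (t+1) (by omega) ht]
        have := hadjit (2*m+1-(t+1)) (by omega) _ hxa
        rwa [show 2*m+1-(t+1)+1 = 2*m+1-t by omega] at this
  · rw [f1 0 (by omega), f3 (2*m+1-1) (by omega) (by omega)]
    have := hadjit 0 (by omega) _ hxa
    rwa [show 2*m+1-(2*m+1-1) = 0 + 1 by omega]

open Classical in
noncomputable def bfsBall {N : ℕ} (G : SimpleGraph (Fin N)) (S : Finset (Fin N)) (r : Fin N) :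
    ℕ → Finset (Fin N)
  | 0 => {r}
  | i+1 => bfsBall G S r i ∪ S.filter (fun v => ∃ u ∈ bfsBall G S r i, G.Adj u v)

lemma layers {N : ℕ} (G : SimpleGraph (Fin N)) (S : Finset (Fin N)) (r : Fin N) (hr : r ∈ S) :
    ∃ L : ℕ → Finset (Fin N), ∃ p : Fin N → Fin N, L 0 = {r} ∧ (∀ i, L i ⊆ S) ∧
    (∀ i j v, v ∈ L i → v ∈ L j → i = j) ∧
    (∀ i, ∀ v ∈ L (i+1), p v ∈ L i ∧ G.Adj (p v) v) ∧
    (∀ u ∈ L 0, ∀ v ∈ S, G.Adj u v → v ∈ L 0 ∪ L 1) ∧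
    (∀ i, ∀ u ∈ L (i+1), ∀ v ∈ S, G.Adj u v → v ∈ L i ∪ L (i+1) ∪ L (i+2)) := by
  classical
  set B := bfsBall G S r with hB
  have B0 : B 0 = {r} := rfl
  have B1 : ∀ i v, v ∈ B (i+1) ↔ v ∈ B i ∨ (v ∈ S ∧ ∃ u ∈ B i, G.Adj u v) := by
    intro i v
    have : B (i+1) = B i ∪ S.filter (fun v => ∃ u ∈ B i, G.Adj u v) := by
      rw [hB, bfsBall]
    rw [this, Finset.mem_union, Finset.mem_filter]
  have Bm : ∀ i j, i ≤ j → B i ⊆ B j := by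
    intro i j hij
    induction j, hij using Nat.le_induction with
    | base => exact subset_rfl
    | succ j _ ih => exact fun v hv => (B1 j v).2 (Or.inl (ih hv))
  have BS : ∀ i, B i ⊆ S := by
    intro i
    induction i with
    | zero => rw [B0]; simpa using hr
    | succ i ih =>
      intro v hv
      rcases (B1 i v).1 hv with h | h
      · exact ih h
      · exact h.1
  let L : ℕ → Finset (Fin N) := fun i => Nat.casesOn i (B 0) (fun i => B (i+1) \ B i)
  have L0 : L 0 = B 0 := rfl
  have L1 : ∀ i, L (i+1) = B (i+1) \ B i := fun i => rfl
  have LB : ∀ i, L i ⊆ B i := by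
    rintro (_ | i)
    · exact subset_rfl
    · rw [L1]; exact Finset.sdiff_subset
  have hlt : ∀ i j v, i < j → v ∈ L i → v ∈ L j → False := by
    intro i j v hij hi hj
    obtain ⟨j, rfl⟩ : ∃ j', j = j' + 1 := ⟨j - 1, by omega⟩
    rw [L1, Finset.mem_sdiff] at hj
    exact hj.2 (Bm i j (by omega) (LB i hi))
  have hpar : ∀ v, ∃ u, ∀ i, v ∈ L (i+1) → u ∈ L i ∧ G.Adj u v := by
    intro v
    by_cases h : ∃ i, v ∈ L (i+1)
    · obtain ⟨i, hi⟩ := h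
      have hi' := hi
      rw [L1, Finset.mem_sdiff, B1] at hi'
      obtain ⟨h1 | ⟨hS, u, hu, huv⟩, h2⟩ := hi'
      · exact absurd h1 h2
      refine ⟨u, fun i' hi2 => ?_⟩
      have : i' = i := by
        rcases lt_trichotomy i i' with h | h | h
        · exact (hlt (i+1) (i'+1) v (by omega) hi hi2).elim
        · exact h.symm
        · exact (hlt (i'+1) (i+1) v (by omega) hi2 hi).elim
      subst this
      refine ⟨?_, huv⟩
      rcases i' with _ | i'
      · exact hu
      · rw [L1, Finset.mem_sdiff]
        exact ⟨hu, fun hu' => h2 ((B1 _ _).2 (Or.inr ⟨hS, u, hu', huv⟩))⟩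
    · exact ⟨v, fun i hi => (h ⟨i, hi⟩).elim⟩
  choose p hp using hpar
  refine ⟨L, p, rfl, fun i => (LB i).trans (BS i), ?_, fun i v hv => hp v i hv, ?_, ?_⟩
  · intro i j v hi hj
    rcases lt_trichotomy i j with h | h | h
    · exact (hlt _ _ v h hi hj).elim
    · exact h
    · exact (hlt _ _ v h hj hi).elim
  · intro u hu v hv huv
    rw [Finset.mem_union, show L 1 = B (0+1) \ B 0 from rfl, Finset.mem_sdiff, L0]
    by_cases h : v ∈ B 0
    · exact Or.inl h
    · exact Or.inr ⟨(B1 _ _).2 (Or.inr ⟨hv, u, hu, huv⟩), h⟩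
  · intro i u hu v hv huv
    rw [L1, Finset.mem_sdiff] at hu
    rw [Finset.mem_union, Finset.mem_union, L1, L1, Finset.mem_sdiff, Finset.mem_sdiff]
    have h2 : v ∈ B (i+1+1) := (B1 _ _).2 (Or.inr ⟨hv, u, hu.1, huv⟩)
    by_cases h1 : v ∈ B (i+1)
    · left
      by_cases h0 : v ∈ B i
      · left
        rcases i with _ | i
        · exact h0
        · rw [L1, Finset.mem_sdiff]
          exact ⟨h0, fun h => hu.2 ((B1 _ _).2 (Or.inr ⟨BS _ hu.1, v, h, huv.symm⟩))⟩
      · exact Or.inr ⟨h1, h0⟩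
    · exact Or.inr ⟨h2, h1⟩

lemma tkey_inj {N : ℕ} (L : ℕ → Finset (Fin N)) (r : Fin N)
    (p : Fin N → Fin N) (h0 : L 0 = {r}) :
    ∀ i, ∀ u ∈ L i, ∀ v ∈ L i, tkey p i u = tkey p i v → u = v := by
  rintro (_ | i) u hu v hv h
  · rw [h0, Finset.mem_singleton] at hu hv
    rw [hu, hv]
  · have h' : (tkey p i (p u) * N + u.val) % N = (tkey p i (p v) * N + v.val) % N := by
      have : tkey p i (p u) * N + u.val = tkey p i (p v) * N + v.val := h
      rw [this]
    rw [Nat.mul_add_mod_self_right, Nat.mul_add_mod_self_right, Nat.mod_eq_of_lt u.2,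
      Nat.mod_eq_of_lt v.2] at h'
    exact Fin.ext h'

/-- one step: a big independent set or a set with small closed neighbourhood -/
lemma one_step {N : ℕ} (G : SimpleGraph (Fin N)) (m : ℕ) (hm : 1 ≤ m) (n : ℕ) (q : ℝ) (hq : 1 ≤ q)
    (hqn : q ^ m = n)
    (hC : ¬ HasCopy (SimpleGraph.cycleGraph (2 * m + 1)) G) (S : Finset (Fin N))
    (hS : S.Nonempty) :
    ∃ I ⊆ S, (∀ u ∈ I, ∀ v ∈ I, ¬ G.Adj u v) ∧ (n ≤ I.card ∨ (I.Nonempty ∧ ∃ W : Finset (Fin N),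
      I ⊆ W ∧ (∀ u ∈ I, ∀ v ∈ S, G.Adj u v → v ∈ W) ∧
      (W.card : ℝ) ≤ ((2 * m - 1 : ℕ) : ℝ) * (2 + q) * I.card)) := by
  classical
  obtain ⟨r, hr⟩ := hS
  obtain ⟨L, p, h0, hLS, hdisj, hp, hn0, hn1⟩ := layers G S r hr
  obtain ⟨c, hc⟩ : ∃ c : ℕ, c = 2 * m - 1 := ⟨_, rfl⟩
  have hc1 : 1 ≤ c := by omega
  have hc1' : (1:ℝ) ≤ c := by exact_mod_cast hc1
  rw [← hc]
  have hind : ∀ i, 1 ≤ i → i ≤ m → ∃ I ⊆ L i, (∀ u ∈ I, ∀ v ∈ I, ¬ G.Adj u v) ∧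
      (L i).card ≤ c * I.card := by
    intro i hi him
    rcases mono_path G (tkey p i) c (L i) (tkey_inj L r p h0 i) with ⟨x, hx, hx2⟩ | h
    · subst hc
      exact (hC (cycle_of_path G L r p h0 hdisj hp m i him hi x hx hx2)).elim
    · exact h
  by_contra hcon
  have grow : ∀ i, i + 1 ≤ m → (c:ℝ) * q ^ (i+1) ≤ (L (i+1)).card ∧
      (L i).card ≤ (L (i+1)).card := by
    intro i
    induction i with
    | zero =>
      intro _
      have : (c:ℝ) * q < (L 1).card := by
        by_contra hlt
        push Not at hlt
        refine hcon ⟨L 0, hLS 0, ?_, Or.inr ⟨⟨r, by simp [h0]⟩, L 0 ∪ L 1, Finset.subset_union_left, hn0, ?_⟩⟩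
        · intro u hu v hv
          rw [h0, Finset.mem_singleton] at hu hv
          rw [hu, hv]; exact G.loopless.irrefl r
        · have h1 : (((L 0 ∪ L 1).card : ℕ) : ℝ) ≤ (L 0).card + (L 1).card := by
            exact_mod_cast Finset.card_union_le _ _
          have h2 : (L 0).card = 1 := by simp [h0]
          rw [h2] at h1 ⊢
          push_cast at *
          nlinarith
      refine ⟨by simpa using this.le, ?_⟩
      have h2 : (L 0).card = 1 := by simp [h0]
      have : (1:ℝ) < (L 1).card := by nlinarith
      rw [h2]
      exact_mod_cast this.le
    | succ i ih =>
      intro him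
      obtain ⟨g1, g2⟩ := ih (by omega)
      have : q * (L (i+1)).card < (L (i+2)).card := by
        by_contra hlt
        push Not at hlt
        obtain ⟨I, hIL, hI1, hI2⟩ := hind (i+1) (by omega) (by omega)
        have hpos : (0:ℝ) < (L (i+1)).card := by
          refine lt_of_lt_of_le ?_ g1
          positivity
        have hpos' : 0 < (L (i+1)).card := by exact_mod_cast hpos
        refine hcon ⟨I, hIL.trans (hLS _), hI1, Or.inr ⟨?_, L i ∪ L (i+1) ∪ L (i+2), ?_, ?_, ?_⟩⟩
        · rw [← Finset.card_pos]
          by_contra h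
          have : I.card = 0 := by omega
          rw [this] at hI2; omega
        · intro u hu
          simp [hIL hu]
        · exact fun u hu => hn1 i u (hIL hu)
        · have h1 : (((L i ∪ L (i+1) ∪ L (i+2)).card : ℕ) : ℝ) ≤
              (L i).card + (L (i+1)).card + (L (i+2)).card := by
            have a1 := Finset.card_union_le (L i ∪ L (i+1)) (L (i+2))
            have a2 := Finset.card_union_le (L i) (L (i+1))
            exact_mod_cast a1.trans (by omega)
          have g2' : ((L i).card : ℝ) ≤ (L (i+1)).card := by exact_mod_cast g2
          have hI2' : ((L (i+1)).card : ℝ) ≤ c * I.card := by exact_mod_cast hI2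
          calc _ ≤ _ := h1
            _ ≤ (2 + q) * (L (i+1)).card := by linarith
            _ ≤ (2 + q) * (c * I.card) := by gcongr
            _ = _ := by ring
      constructor
      · refine le_trans ?_ this.le
        rw [pow_succ q (i+1)]
        nlinarith
      · have h3 : ((L (i+1)).card : ℝ) ≤ (L (i+2)).card := by
          nlinarith [Nat.cast_nonneg (α := ℝ) (L (i+1)).card]
        exact_mod_cast h3
  have hfin := (grow (m-1) (by omega)).1
  rw [Nat.sub_add_cancel hm, hqn] at hfin
  obtain ⟨I, hIL, hI1, hI2⟩ := hind m hm le_rfl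
  refine hcon ⟨I, hIL.trans (hLS _), hI1, Or.inl ?_⟩
  have : c * n ≤ (L m).card := by exact_mod_cast hfin
  exact Nat.le_of_mul_le_mul_left (this.trans hI2) hc1

lemma indep_all {N : ℕ} (G : SimpleGraph (Fin N)) (m : ℕ) (hm : 1 ≤ m) (n : ℕ) (q : ℝ) (hq : 1 ≤ q)
    (hqn : q ^ m = n)
    (hC : ¬ HasCopy (SimpleGraph.cycleGraph (2 * m + 1)) G) (S : Finset (Fin N)) :
    ∃ I ⊆ S, (∀ u ∈ I, ∀ v ∈ I, ¬ G.Adj u v) ∧ (n ≤ I.card ∨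
      (S.card : ℝ) ≤ ((2 * m - 1 : ℕ) : ℝ) * (2 + q) * I.card) := by
  classical
  induction S using Finset.strongInduction with
  | H S ih =>
    rcases S.eq_empty_or_nonempty with h | h
    · exact ⟨∅, by simp, by simp, Or.inr (by simp [h])⟩
    obtain ⟨I, hIS, hI, h1 | ⟨hne, W, hIW, hW, hcard⟩⟩ := one_step G m hm n q hq hqn hC S h
    · exact ⟨I, hIS, hI, Or.inl h1⟩
    obtain ⟨u, hu⟩ := hne
    obtain ⟨J, hJS, hJ, hJc⟩ := ih (S \ W) (by
      refine Finset.ssubset_iff_subset_ne.2 ⟨Finset.sdiff_subset, fun he => ?_⟩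
      have := hIS hu
      rw [← he, Finset.mem_sdiff] at this
      exact this.2 (hIW hu))
    have hdis : Disjoint I J := by
      rw [Finset.disjoint_left]
      intro a ha hb
      exact (Finset.mem_sdiff.1 (hJS hb)).2 (hIW ha)
    have hIJ : ∀ a ∈ I, ∀ b ∈ J, ¬ G.Adj a b := fun a ha b hb hab =>
      (Finset.mem_sdiff.1 (hJS hb)).2 (hW a ha b (Finset.mem_sdiff.1 (hJS hb)).1 hab)
    refine ⟨I ∪ J, Finset.union_subset hIS (hJS.trans Finset.sdiff_subset), ?_, ?_⟩
    · intro a ha b hb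
      rcases Finset.mem_union.1 ha with ha | ha <;> rcases Finset.mem_union.1 hb with hb | hb
      · exact hI a ha b hb
      · exact hIJ a ha b hb
      · exact fun h => hIJ b hb a ha h.symm
      · exact hJ a ha b hb
    · rw [Finset.card_union_of_disjoint hdis]
      rcases hJc with h | h
      · left; omega
      · right
        have h3 : S.card ≤ (S \ W).card + W.card := by
          have h4 : S ⊆ (S \ W) ∪ W := by
            intro a ha
            by_cases hh : a ∈ W <;> simp [ha, hh]
          exact (Finset.card_le_card h4).trans (Finset.card_union_le _ _)
        have h3' : (S.card : ℝ) ≤ (S \ W).card + W.card := by exact_mod_cast h3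
        push_cast
        linarith

theorem stmt_12 (n k : ℕ) (hn : 2 ≤ n) (hk : 3 ≤ k) (hodd : Odd k) :
    (ramseyNumber (SimpleGraph.cycleGraph k) (⊤ : SimpleGraph (Fin n)) : ℝ) ≤
      3 * k * (n : ℝ) ^ (((k : ℝ) + 1) / ((k : ℝ) - 1)) := by
  obtain ⟨m, rfl⟩ := hodd
  have hm : 1 ≤ m := by omega
  have hmR : (1:ℝ) ≤ m := by exact_mod_cast hm
  have hnR : (2:ℝ) ≤ n := by exact_mod_cast hn
  obtain ⟨q, hqdef⟩ : ∃ q : ℝ, q = (n:ℝ) ^ ((m:ℝ)⁻¹) := ⟨_, rfl⟩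
  have hq : 1 ≤ q := by
    rw [hqdef]; exact Real.one_le_rpow (by linarith) (by positivity)
  have hqn : q ^ m = n := by
    rw [hqdef]; exact Real.rpow_inv_natCast_pow (by linarith) (by omega)
  have hpow : (n : ℝ) ^ ((((2*m+1 : ℕ) : ℝ) + 1) / (((2*m+1 : ℕ) : ℝ) - 1)) = n * q := by
    have e : ((((2*m+1 : ℕ) : ℝ) + 1) / (((2*m+1 : ℕ) : ℝ) - 1)) = 1 + (m:ℝ)⁻¹ := by
      push_cast
      have : (m:ℝ) ≠ 0 := by positivity
      field_simp
      ring
    rw [e, Real.rpow_add (by linarith), Real.rpow_one, hqdef]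
  rw [hpow]
  have hpos : (0:ℝ) ≤ 3 * ((2*m+1 : ℕ) : ℝ) * (n * q) := by positivity
  refine le_trans ?_ (Nat.floor_le hpos)
  rw [Nat.cast_le]
  apply Nat.sInf_le
  intro C
  by_cases hC : HasCopy (SimpleGraph.cycleGraph (2*m+1)) C
  · exact Or.inl hC
  right
  obtain ⟨I, -, hI, hcard⟩ := indep_all C m hm n q hq hqn hC Finset.univ
  have hnI : n ≤ I.card := by
    rcases hcard with h | h
    · exact h
    by_contra hlt
    rw [Finset.card_univ, Fintype.card_fin] at h
    have h1 := Nat.lt_floor_add_one (3 * ((2*m+1 : ℕ) : ℝ) * (n * q))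
    have h2 : (I.card : ℝ) + 1 ≤ n := by exact_mod_cast (by omega : I.card + 1 ≤ n)
    have h3 : ((2*m-1 : ℕ) : ℝ) = 2 * m - 1 := by
      rw [Nat.cast_sub (by omega)]; push_cast; ring
    rw [h3] at h
    push_cast at h h1
    have hD : (2 * (m:ℝ) - 1) * (2 + q) ≤ 3 * (2 * m + 1) * q := by nlinarith
    have hD1 : 1 ≤ 3 * (2 * (m:ℝ) + 1) * q := by nlinarith
    have h4 : (2 * (m:ℝ) - 1) * (2 + q) * I.card ≤ (3 * (2 * m + 1) * q) * (n - 1) := by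
      apply mul_le_mul hD (by linarith) (by positivity) (by linarith)
    nlinarith
  obtain ⟨J, hJI, hJ⟩ := Finset.exists_subset_card_eq hnI
  let e := J.equivFinOfCardEq hJ
  refine ⟨⟨fun a => (e.symm a).val, ?_⟩, ?_⟩
  · intro a b hab
    rw [SimpleGraph.compl_adj]
    refine ⟨fun h => hab.ne (e.symm.injective (Subtype.ext h)), ?_⟩
    exact hI _ (hJI (e.symm a).2) _ (hJI (e.symm b).2)
  · intro a b h
    exact e.symm.injective (Subtype.ext h)
end
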